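/- arXiv:1812.11576 — 5 statements merged into one kernel-verified Lean document; each statement's English description precedes it below -/
import Mathlib

section
/- Let B and B̄ be as defined in the context. Then Bᵗ · B̄ = N^m · I_r in the ring of r × r matrices over the polynomial ring F[N]. (Lemma 3.32 of the paper.) -/
open Matrix

/-- The index set appearing in condition (3.12) of the paper. -/
def siegelIdxSet (m : ℕ) (k : ℕ → ℕ) (u : ℕ) : Set (ℕ × ℕ × ℕ) :=
  {p | u ≤ p.1 ∧ p.1 ≤ m - 1 ∧ p.1 + 2 ≤ p.2.1 ∧ p.2.1 ≤ m + 1 ∧ 1 ≤ p.2.2 ∧ p.2.2 ≤ k p.2.1}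

/-- Condition (3.12) of the paper. -/
def IsSiegelBasis (F : Type*) [Field F] {V : Type*} [AddCommGroup V] [Module F V]
    (m : ℕ) (k : ℕ → ℕ) (N : Module.End F V) (l : ℕ → ℕ → V) : Prop :=
  ∀ u : ℕ, u < m →
    LinearIndependent F
      (fun p : siegelIdxSet m k u => (N ^ p.val.1) (l p.val.2.1 p.val.2.2)) ∧
    Submodule.span F
        ((fun p : ℕ × ℕ × ℕ => (N ^ p.1) (l p.2.1 p.2.2)) '' siegelIdxSet m k u) =
      LinearMap.range (N ^ u)

/-- The matrices `P_{u,v,y,z}` (entries `P u v y z i j`) satisfy the defining relation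
(3.20) of the paper. -/
def SatisfiesP {F : Type*} [Field F] {V : Type*} [AddCommGroup V] [Module F V]
    (m : ℕ) (k : ℕ → ℕ) (N : Module.End F V) (l : ℕ → ℕ → V)
    (P : ℕ → ℕ → ℕ → ℕ → ℕ → ℕ → F) : Prop :=
  ∀ u ∈ Finset.Icc 1 (m + 1), ∀ v ∈ Finset.Icc 0 (m - 1), ∀ i ∈ Finset.Icc 1 (k u),
    (N ^ v) (l u i) =
      -∑ z ∈ Finset.Icc v (m - 1), ∑ y ∈ Finset.Icc (z + 2) (m + 1),
        ∑ j ∈ Finset.Icc 1 (k y), P u v y z i j • (N ^ z) (l y j)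

/-- Row index Finset of a skew block matrix: pairs `⟨α, i⟩` with `1 ≤ α ≤ m+1`,
`1 ≤ i ≤ k α`. -/
def blockIdx (m : ℕ) (k : ℕ → ℕ) : Finset ((_ : ℕ) × ℕ) :=
  (Finset.Icc 1 (m + 1)).sigma fun u => Finset.Icc 1 (k u)

/-- Column index Finset of a skew block matrix: pairs `⟨β, j⟩` with `1 ≤ β ≤ m+1`,
`1 ≤ j ≤ k (m+2-β)`. -/
def dualBlockIdx (m : ℕ) (k : ℕ → ℕ) : Finset ((_ : ℕ) × ℕ) :=
  (Finset.Icc 1 (m + 1)).sigma fun b => Finset.Icc 1 (k (m + 2 - b))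

/-- Entry of the skew block matrix `C_t` at row `a = ⟨α, i⟩`, column `b = ⟨β, j⟩`:
the `(α,β)`-th block of `C_t` is `(S_{m+2-β, m+1-β, α, t})ᵗ` whenever this Siegel matrix
is defined, the `(t+1, m+1-t)`-th block is the identity, and all other blocks are `0`.
Here `S_{u,u-1,y,z} = P_{u,u-1,y,z}`. -/
def Centry {F : Type*} [Field F] (m : ℕ) (P : ℕ → ℕ → ℕ → ℕ → ℕ → ℕ → F)
    (t : ℕ) (a b : (_ : ℕ) × ℕ) : F :=
  if a.1 = t + 1 ∧ b.1 = m + 1 - t then (if a.2 = b.2 then 1 else 0)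
  else if 2 ≤ b.1 ∧ m + 1 - t ≤ b.1 ∧ t + 1 ≤ m ∧ t + 2 ≤ a.1 then
    P (m + 2 - b.1) (m + 1 - b.1) a.1 t b.2 a.2
  else 0

/-- Entry of the skew block matrix `D_t` (denoted `C̄_t` in the paper) at row `a = ⟨α, i⟩`,
column `b = ⟨β, j⟩`: for `t ≤ m-1` the `(α,β)`-th block is `-P_{α, m-1-t, m+2-β, m-β}`
for `β ≤ t+1` and `0` for `β > t+1`; `D_m` has the identity as `(1, m+1)`-th block and all
other blocks `0`. -/
def Dentry {F : Type*} [Field F] (m : ℕ) (P : ℕ → ℕ → ℕ → ℕ → ℕ → ℕ → F)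
    (t : ℕ) (a b : (_ : ℕ) × ℕ) : F :=
  if t = m then (if a.1 = 1 ∧ b.1 = m + 1 ∧ a.2 = b.2 then 1 else 0)
  else if b.1 ≤ t + 1 then -P a.1 (m - 1 - t) (m + 2 - b.1) (m - b.1) a.2 b.2
  else 0

/-- The matrix `B = Σ_{t=0}^{m} C_t N^t ∈ M_r(F[N])` (with `N` the polynomial variable). -/
noncomputable def Bmat {F : Type*} [Field F] (m : ℕ) (k : ℕ → ℕ)
    (P : ℕ → ℕ → ℕ → ℕ → ℕ → ℕ → F) :
    Matrix {p // p ∈ blockIdx m k} {p // p ∈ dualBlockIdx m k} (Polynomial F) :=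
  Matrix.of fun a b =>
    ∑ t ∈ Finset.range (m + 1), Polynomial.C (Centry m P t a.1 b.1) * Polynomial.X ^ t

/-- The matrix `B̄ = Σ_{t=0}^{m} D_t N^t ∈ M_r(F[N])`. -/
noncomputable def Bbarmat {F : Type*} [Field F] (m : ℕ) (k : ℕ → ℕ)
    (P : ℕ → ℕ → ℕ → ℕ → ℕ → ℕ → F) :
    Matrix {p // p ∈ blockIdx m k} {p // p ∈ dualBlockIdx m k} (Polynomial F) :=
  Matrix.of fun a b =>
    ∑ t ∈ Finset.range (m + 1), Polynomial.C (Dentry m P t a.1 b.1) * Polynomial.X ^ t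


lemma aux_dual {F : Type*} [Field F] {V : Type*} [AddCommGroup V] [Module F V]
    (m : ℕ) (hm : 1 ≤ m) (N : Module.End F V)
    (k : ℕ → ℕ) (l : ℕ → ℕ → V) (hbasis : IsSiegelBasis F m k N l)
    (q : ℕ × ℕ × ℕ) (hq : q ∈ siegelIdxSet m k 0) :
    ∃ φ : V →ₗ[F] F, ∀ z y j, (z, y, j) ∈ siegelIdxSet m k 0 →
      φ ((N ^ z) (l y j)) = if (z, y, j) = q then 1 else 0 := by
  obtain ⟨hli, hsp⟩ := hbasis 0 (by omega)
  have hsp' : ⊤ ≤ Submodule.span F (Set.range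
      (fun p : siegelIdxSet m k 0 => (N ^ p.val.1) (l p.val.2.1 p.val.2.2))) := by
    have : Set.range (fun p : siegelIdxSet m k 0 => (N ^ p.val.1) (l p.val.2.1 p.val.2.2)) =
      ((fun p : ℕ × ℕ × ℕ => (N ^ p.1) (l p.2.1 p.2.2)) '' siegelIdxSet m k 0) := by
      ext x
      simp only [Set.mem_range, Set.mem_image, Subtype.exists, exists_prop]
    rw [this, hsp, pow_zero, Module.End.one_eq_id, LinearMap.range_id]
  let b := Module.Basis.mk hli hsp'
  refine ⟨b.coord ⟨q, hq⟩, fun z y j h => ?_⟩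
  have h1 : (N ^ z) (l y j) = b ⟨(z, y, j), h⟩ := by
    simp [b]
  rw [h1, Module.Basis.coord_apply, Module.Basis.repr_self, Finsupp.single_apply]
  simp only [Subtype.mk.injEq]

lemma aux_coeff {F : Type*} [Field F] (m s : ℕ) (c d : ℕ → F) :
    ((∑ t ∈ Finset.range (m + 1), Polynomial.C (c t) * Polynomial.X ^ t) *
      (∑ t ∈ Finset.range (m + 1), Polynomial.C (d t) * Polynomial.X ^ t)).coeff s =
    ∑ t ∈ Finset.range (m + 1), if t ≤ s ∧ s - t ≤ m then c t * d (s - t) else 0 := by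
  rw [Finset.sum_mul, Polynomial.finsetSum_coeff]
  refine Finset.sum_congr rfl fun t _ => ?_
  rw [mul_assoc, Polynomial.coeff_C_mul, Polynomial.coeff_X_pow_mul']
  by_cases h : t ≤ s
  · simp [h, Polynomial.finsetSum_coeff, Polynomial.coeff_X_pow, Nat.lt_succ_iff]
  · simp [h]

lemma aux_D {F : Type*} [Field F] {V : Type*} [AddCommGroup V] [Module F V]
    (m : ℕ) (hm : 1 ≤ m) (N : Module.End F V)
    (k : ℕ → ℕ) (l : ℕ → ℕ → V)
    (P : ℕ → ℕ → ℕ → ℕ → ℕ → ℕ → F) (hP : SatisfiesP m k N l P)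
    (a b : (_ : ℕ) × ℕ) (ha : a ∈ blockIdx m k) (hb : b ∈ dualBlockIdx m k) (hbm : b.1 ≤ m)
    (φ : V →ₗ[F] F) (hφ : ∀ z y j, (z, y, j) ∈ siegelIdxSet m k 0 →
      φ ((N ^ z) (l y j)) = if (z, y, j) = (m - b.1, m + 2 - b.1, b.2) then 1 else 0)
    (t : ℕ) (ht : t < m) :
    Dentry m P t a b = φ ((N ^ (m - 1 - t)) (l a.1 a.2)) := by
  simp only [blockIdx, dualBlockIdx, Finset.mem_sigma, Finset.mem_Icc] at ha hb
  rw [hP a.1 (by simp; omega) (m - 1 - t) (by simp) a.2 (by simp; omega)]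
  simp only [map_neg, map_sum, map_smul, smul_eq_mul]
  have : ∀ z ∈ Finset.Icc (m - 1 - t) (m - 1), ∑ y ∈ Finset.Icc (z + 2) (m + 1),
        ∑ j ∈ Finset.Icc 1 (k y), P a.1 (m - 1 - t) y z a.2 j * φ ((N ^ z) (l y j)) =
        if z = m - b.1 then P a.1 (m - 1 - t) (m + 2 - b.1) (m - b.1) a.2 b.2 else 0 := by
    intro z hz
    rw [Finset.mem_Icc] at hz
    have h1 : ∀ y ∈ Finset.Icc (z + 2) (m + 1),
        ∑ j ∈ Finset.Icc 1 (k y), P a.1 (m - 1 - t) y z a.2 j * φ ((N ^ z) (l y j)) =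
        if y = m + 2 - b.1 then (if z = m - b.1 then
          P a.1 (m - 1 - t) (m + 2 - b.1) (m - b.1) a.2 b.2 else 0) else 0 := by
      intro y hy
      rw [Finset.mem_Icc] at hy
      have h2 : ∀ j ∈ Finset.Icc 1 (k y),
          P a.1 (m - 1 - t) y z a.2 j * φ ((N ^ z) (l y j)) =
          if j = b.2 then (if y = m + 2 - b.1 then (if z = m - b.1 then
          P a.1 (m - 1 - t) (m + 2 - b.1) (m - b.1) a.2 b.2 else 0) else 0) else 0 := by
        intro j hj
        rw [Finset.mem_Icc] at hj
        rw [hφ z y j ⟨by simp, by simp; omega, by simp; omega, by simp; omega, by simp; omega,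
          by simp; omega⟩]
        simp only [Prod.mk.injEq]
        by_cases e1 : z = m - b.1 <;> by_cases e2 : y = m + 2 - b.1 <;> by_cases e3 : j = b.2 <;>
          simp [e1, e2, e3]
      rw [Finset.sum_congr rfl h2, Finset.sum_ite_eq']
      by_cases e2 : y = m + 2 - b.1
      · rw [if_pos]
        rw [Finset.mem_Icc, e2]; omega
      · simp [e2]
    rw [Finset.sum_congr rfl h1, Finset.sum_ite_eq']
    by_cases e2 : z = m - b.1
    · rw [if_pos]
      rw [Finset.mem_Icc, e2]; omega
    · simp [e2]
  rw [Finset.sum_congr rfl this, Finset.sum_ite_eq', Dentry, if_neg (by omega)]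
  by_cases e : b.1 ≤ t + 1
  · rw [if_pos e, if_pos]
    rw [Finset.mem_Icc]; omega
  · rw [if_neg e, if_neg, neg_zero]
    rw [Finset.mem_Icc]; omega

lemma aux_C {F : Type*} [Field F] {V : Type*} [AddCommGroup V] [Module F V]
    (m : ℕ) (k : ℕ → ℕ) (l : ℕ → ℕ → V)
    (P : ℕ → ℕ → ℕ → ℕ → ℕ → ℕ → F)
    (b : (_ : ℕ) × ℕ) (hb : b ∈ dualBlockIdx m k) (t : ℕ) (ht : t ≤ m) :
    ∑ a ∈ blockIdx m k, Centry m P t a b • l a.1 a.2 =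
      (if t = m + 1 - b.1 then l (m + 2 - b.1) b.2 else 0) +
      (if 2 ≤ b.1 ∧ t ∈ Finset.Icc (m + 1 - b.1) (m - 1) then
        ∑ y ∈ Finset.Icc (t + 2) (m + 1), ∑ j ∈ Finset.Icc 1 (k y),
          P (m + 2 - b.1) (m + 1 - b.1) y t b.2 j • l y j else 0) := by
  simp only [dualBlockIdx, Finset.mem_sigma, Finset.mem_Icc] at hb
  have hsplit : ∀ a ∈ blockIdx m k, Centry m P t a b • l a.1 a.2 =
      (if a = ⟨t + 1, b.2⟩ then (if t = m + 1 - b.1 then l (m + 2 - b.1) b.2 else 0) else 0) +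
      (if t + 2 ≤ a.1 then (if 2 ≤ b.1 ∧ t ∈ Finset.Icc (m + 1 - b.1) (m - 1) then
        P (m + 2 - b.1) (m + 1 - b.1) a.1 t b.2 a.2 • l a.1 a.2 else 0) else 0) := by
    rintro ⟨α, i⟩ ha
    obtain ⟨β, j⟩ := b
    simp only [Centry, Sigma.mk.injEq, heq_eq_eq, Finset.mem_Icc] at *
    by_cases h1 : α = t + 1
    · subst h1
      have : ¬ (t + 2 ≤ t + 1) := by omega
      by_cases h2 : t = m + 1 - β
      · have h3 : β = m + 1 - t := by omega
        have h4 : m + 2 - β = t + 1 := by omega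
        by_cases h5 : i = j
        · subst h5
          rw [if_pos ⟨rfl, h3⟩, if_pos rfl, if_pos ⟨rfl, rfl⟩, if_pos h2, if_neg this, h4]
          simp
        · rw [if_pos ⟨rfl, h3⟩, if_neg h5, if_neg (by tauto), if_neg this]
          simp
      · rw [if_neg (by omega), if_neg (by omega), if_neg this, if_neg h2]
        simp
    · rw [if_neg (by tauto), if_neg (c := α = t + 1 ∧ i = j) (by tauto), zero_add]
      by_cases h2 : t + 2 ≤ α
      · rw [if_pos h2]
        by_cases h3 : 2 ≤ β ∧ m + 1 - β ≤ t ∧ t ≤ m - 1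
        · rw [if_pos h3, if_pos (by omega)]
        · rw [if_neg h3, if_neg (by omega), zero_smul]
      · rw [if_neg h2, if_neg (by omega), zero_smul]
  rw [Finset.sum_congr rfl hsplit, Finset.sum_add_distrib]
  congr 1
  · rw [Finset.sum_ite_eq']
    by_cases h : t = m + 1 - b.1
    · rw [if_pos]
      have h4 : m + 2 - b.1 = t + 1 := by omega
      simp only [blockIdx, Finset.mem_sigma, Finset.mem_Icc]
      rw [h4] at hb
      omega
    · simp [h]
  · rw [blockIdx, Finset.sum_sigma]
    by_cases h : 2 ≤ b.1 ∧ t ∈ Finset.Icc (m + 1 - b.1) (m - 1)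
    · simp only [if_pos h]
      symm
      apply Finset.sum_subset_zero_on_sdiff
      · intro y; simp only [Finset.mem_Icc]; omega
      · intro y hy
        simp only [Finset.mem_sdiff, Finset.mem_Icc] at hy
        refine Finset.sum_eq_zero fun j _ => ?_
        rw [if_neg (by omega)]
      · intro y hy
        rw [Finset.mem_Icc] at hy
        simp [hy.1]
    · simp only [if_neg h, ite_self, Finset.sum_const_zero]

lemma aux_rel {F : Type*} [Field F] {V : Type*} [AddCommGroup V] [Module F V]
    (m : ℕ) (hm : 1 ≤ m) (N : Module.End F V) (hN : N ^ m = 0)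
    (k : ℕ → ℕ) (l : ℕ → ℕ → V)
    (P : ℕ → ℕ → ℕ → ℕ → ℕ → ℕ → F) (hP : SatisfiesP m k N l P)
    (b : (_ : ℕ) × ℕ) (hb : b ∈ dualBlockIdx m k) :
    ∑ t ∈ Finset.range (m + 1),
      (N ^ t) (∑ a ∈ blockIdx m k, Centry m P t a b • l a.1 a.2) = 0 := by
  have hb' := hb
  simp only [dualBlockIdx, Finset.mem_sigma, Finset.mem_Icc] at hb'
  have h1 : ∀ t ∈ Finset.range (m + 1),
      (N ^ t) (∑ a ∈ blockIdx m k, Centry m P t a b • l a.1 a.2) =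
      (if t = m + 1 - b.1 then (N ^ (m + 1 - b.1)) (l (m + 2 - b.1) b.2) else 0) +
      (if t ∈ Finset.Icc (m + 1 - b.1) (m - 1) then (if 2 ≤ b.1 then
        ∑ y ∈ Finset.Icc (t + 2) (m + 1), ∑ j ∈ Finset.Icc 1 (k y),
          P (m + 2 - b.1) (m + 1 - b.1) y t b.2 j • (N ^ t) (l y j) else 0) else 0) := by
    intro t ht
    rw [aux_C m k l P b hb t (by simp at ht; omega), map_add]
    congr 1
    · split_ifs with h
      · rw [h]
      · simp
    · by_cases h2 : 2 ≤ b.1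
      · by_cases h3 : t ∈ Finset.Icc (m + 1 - b.1) (m - 1)
        · simp only [h2, h3, and_self, if_true, map_sum, map_smul]
        · simp only [h3, and_false, if_false, map_zero]
      · simp [h2]
  rw [Finset.sum_congr rfl h1, Finset.sum_add_distrib, Finset.sum_ite_eq',
    if_pos (by simp; omega), Finset.sum_ite_mem,
    Finset.inter_eq_right.mpr (by intro t; simp only [Finset.mem_Icc, Finset.mem_range]; omega)]
  by_cases h2 : 2 ≤ b.1
  · simp only [h2, if_true]
    rw [hP (m + 2 - b.1) (by simp; omega) (m + 1 - b.1) (by simp; omega) b.2 (by simp; omega)]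
    exact neg_add_cancel _
  · have : m + 1 - b.1 = m := by omega
    simp [h2, this, hN]

lemma aux_pair {F : Type*} [Field F] {V : Type*} [AddCommGroup V] [Module F V]
    (m : ℕ) (hm : 1 ≤ m) (N : Module.End F V)
    (k : ℕ → ℕ) (l : ℕ → ℕ → V)
    (P : ℕ → ℕ → ℕ → ℕ → ℕ → ℕ → F)
    (b b' : (_ : ℕ) × ℕ) (hb : b ∈ dualBlockIdx m k) (hb' : b' ∈ dualBlockIdx m k)
    (hbm : b.1 ≤ m)
    (φ : V →ₗ[F] F) (hφ : ∀ z y j, (z, y, j) ∈ siegelIdxSet m k 0 →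
      φ ((N ^ z) (l y j)) = if (z, y, j) = (m - b.1, m + 2 - b.1, b.2) then 1 else 0)
    (t : ℕ) (ht : t ≤ m) (p : ℕ) (hp : 1 ≤ p) (hpt : p ≤ t) :
    φ ((N ^ (t - p)) (∑ a ∈ blockIdx m k, Centry m P t a b' • l a.1 a.2)) =
      if t = m + 1 - b'.1 then (if p = 1 ∧ b' = b then 1 else 0) else 0 := by
  have hb1 := hb
  have hb1' := hb'
  simp only [dualBlockIdx, Finset.mem_sigma, Finset.mem_Icc] at hb1 hb1'
  rw [aux_C m k l P b' hb' t ht, map_add, map_add]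
  have h2 : φ ((N ^ (t - p)) (if 2 ≤ b'.1 ∧ t ∈ Finset.Icc (m + 1 - b'.1) (m - 1) then
        ∑ y ∈ Finset.Icc (t + 2) (m + 1), ∑ j ∈ Finset.Icc 1 (k y),
          P (m + 2 - b'.1) (m + 1 - b'.1) y t b'.2 j • l y j else 0)) = 0 := by
    split_ifs with h
    · rw [Finset.mem_Icc] at h
      simp only [map_sum, map_smul]
      refine Finset.sum_eq_zero fun y hy => Finset.sum_eq_zero fun j hj => ?_
      rw [Finset.mem_Icc] at hy hj
      rw [hφ (t - p) y j ⟨by simp, by simp; omega, by simp; omega, by simp; omega, by simp; omega,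
          by simp; omega⟩, if_neg, smul_zero]
      simp only [Prod.mk.injEq]
      omega
    · simp
  rw [h2, add_zero]
  split_ifs with h h3 h3
  · obtain ⟨rfl, rfl⟩ := h3
    rw [hφ _ _ _ ⟨by simp, by simp; omega, by simp; omega, by simp; omega, by simp; omega,
          by simp; omega⟩, if_pos]
    simp only [Prod.mk.injEq, and_true]
    omega
  · rw [hφ _ _ _ ⟨by simp, by simp; omega, by simp; omega, by simp; omega, by simp; omega,
          by simp; omega⟩, if_neg]
    simp only [Prod.mk.injEq]
    rintro ⟨e1, e2, e3⟩
    refine h3 ⟨by omega, ?_⟩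
    obtain ⟨β, j⟩ := b
    obtain ⟨β', j'⟩ := b'
    simp only [Sigma.mk.injEq, heq_eq_eq] at *
    omega
  · simp

lemma aux_entry {F : Type*} [Field F] {V : Type*} [AddCommGroup V] [Module F V]
    (m : ℕ) (hm : 1 ≤ m) (N : Module.End F V) (hN : N ^ m = 0)
    (k : ℕ → ℕ) (l : ℕ → ℕ → V) (hbasis : IsSiegelBasis F m k N l)
    (P : ℕ → ℕ → ℕ → ℕ → ℕ → ℕ → F) (hP : SatisfiesP m k N l P)
    (b b' : (_ : ℕ) × ℕ) (hb : b ∈ dualBlockIdx m k) (hb' : b' ∈ dualBlockIdx m k) (s : ℕ) :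
    ∑ a ∈ blockIdx m k, ∑ t ∈ Finset.range (m + 1),
      (if t ≤ s ∧ s - t ≤ m then Centry m P t a b' * Dentry m P (s - t) a b else 0) =
    if s = m ∧ b' = b then 1 else 0 := by
  have hb1 := hb
  have hb1' := hb'
  simp only [dualBlockIdx, Finset.mem_sigma, Finset.mem_Icc] at hb1 hb1'
  by_cases hbm : b.1 ≤ m
  · obtain ⟨φ, hφ⟩ := aux_dual m hm N k l hbasis (m - b.1, m + 2 - b.1, b.2)
      ⟨by simp, by simp; omega, by simp; omega, by simp; omega, by simp; omega, by simp; omega⟩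
    rw [Finset.sum_comm]
    have h1 : ∀ t ∈ Finset.range (m + 1), ∑ a ∈ blockIdx m k,
        (if t ≤ s ∧ s - t ≤ m then Centry m P t a b' * Dentry m P (s - t) a b else 0) =
        if t ≤ s ∧ s - t < m then
          φ ((N ^ (m - 1 - (s - t))) (∑ a ∈ blockIdx m k, Centry m P t a b' • l a.1 a.2))
        else 0 := by
      intro t ht
      by_cases h : t ≤ s ∧ s - t < m
      · rw [if_pos h]
        simp only [map_sum, map_smul, smul_eq_mul]
        refine Finset.sum_congr rfl fun a ha => ?_
        rw [if_pos (by omega), aux_D m hm N k l P hP a b ha hb hbm φ hφ _ h.2]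
      · rw [if_neg h]
        refine Finset.sum_eq_zero fun a ha => ?_
        split_ifs with h'
        · have : s - t = m := by omega
          rw [this, Dentry, if_pos rfl, if_neg (by omega), mul_zero]
        · rfl
    rw [Finset.sum_congr rfl h1]
    by_cases hs : s < m
    · rw [if_neg (by omega)]
      have := congrArg (fun v => φ ((N ^ (m - 1 - s)) v)) (aux_rel m hm N hN k l P hP b' hb')
      simp only [map_zero] at this
      rw [map_sum, map_sum] at this
      refine Eq.trans ?_ this
      refine Finset.sum_congr rfl fun t ht => ?_
      rw [← Module.End.mul_apply, ← pow_add]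
      by_cases hts : t ≤ s
      · rw [if_pos (by omega)]
        congr 4
        omega
      · have hz : N ^ (m - 1 - s + t) = 0 := pow_eq_zero_of_le (by omega) hN
        rw [if_neg (by omega), hz, LinearMap.zero_apply, map_zero]
    · have h2 : ∀ t ∈ Finset.range (m + 1), (if t ≤ s ∧ s - t < m then
          φ ((N ^ (m - 1 - (s - t))) (∑ a ∈ blockIdx m k, Centry m P t a b' • l a.1 a.2))
        else 0) = if t = m + 1 - b'.1 then (if s = m ∧ b' = b then (1 : F) else 0) else 0 := by
        intro t ht
        rw [Finset.mem_range] at ht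
        by_cases h : t ≤ s ∧ s - t < m
        · rw [if_pos h]
          have e : m - 1 - (s - t) = t - (s - m + 1) := by omega
          rw [e, aux_pair m hm N k l P b b' hb hb' hbm φ hφ t (by omega) (s - m + 1)
            (by omega) (by omega)]
          have e2 : s - m + 1 = 1 ↔ s = m := by omega
          simp only [e2]
        · rw [if_neg h]
          split_ifs with h3 h4
          · obtain ⟨rfl, rfl⟩ := h4
            omega
          · rfl
          · rfl
      rw [Finset.sum_congr rfl h2, Finset.sum_ite_eq', if_pos (by simp; omega)]
  · have hbe : b.1 = m + 1 := by omega
    have e0 : m + 2 - b.1 = 1 := by omega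
    rw [e0] at hb1
    rw [Finset.sum_eq_single ⟨1, b.2⟩]
    · rw [Finset.sum_eq_single 0]
      · obtain ⟨β, j⟩ := b
        obtain ⟨β', j'⟩ := b'
        simp only [Centry, Dentry, Sigma.mk.injEq, heq_eq_eq] at *
        subst hbe
        by_cases hs : s = m
        · subst hs
          by_cases h1 : β' = s + 1
          · by_cases h2 : j = j'
            · simp [h1, h2]
            · simp [h1, h2, Ne.symm h2]
          · simp [h1]
        · by_cases h : s ≤ m
          · have : ¬ (m + 1 ≤ s + 1) := by omega
            simp [hs, this]
          · simp [hs, h]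
      · intro t ht ht0
        split_ifs with h
        · rw [Centry, if_neg (by simp; omega), if_neg (by simp), zero_mul]
        · rfl
      · simp
    · intro a ha hne
      refine Finset.sum_eq_zero fun t ht => ?_
      split_ifs with h
      · have : Dentry m P (s - t) a b = 0 := by
          rw [Dentry]
          split_ifs with h1 h2 h3
          · exfalso
            apply hne
            obtain ⟨α, i⟩ := a
            simp only [Sigma.mk.injEq, heq_eq_eq] at *
            exact ⟨h2.1, h2.2.2⟩
          · rfl
          · omega
          · rfl
        rw [this, mul_zero]
      · rfl
    · intro h
      exfalso
      apply h
      simp only [blockIdx, Finset.mem_sigma, Finset.mem_Icc]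
      omega

/-- Lemma 3.32 of the paper: `Bᵗ ⬝ B̄ = N^m I_r` in `M_r(F[N])`. -/
theorem stmt_0 {F : Type*} [Field F] {V : Type*} [AddCommGroup V] [Module F V]
    [FiniteDimensional F V]
    (m : ℕ) (hm : 1 ≤ m) (N : Module.End F V) (hN : N ^ m = 0)
    (k : ℕ → ℕ) (l : ℕ → ℕ → V) (hbasis : IsSiegelBasis F m k N l)
    (P : ℕ → ℕ → ℕ → ℕ → ℕ → ℕ → F) (hP : SatisfiesP m k N l P) :
    (Bmat m k P)ᵀ * Bbarmat m k P =
      (Polynomial.X : Polynomial F) ^ m •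
        (1 : Matrix {p // p ∈ dualBlockIdx m k} {p // p ∈ dualBlockIdx m k} (Polynomial F)) := by
  ext b' b s
  rw [Matrix.mul_apply]
  simp only [Matrix.transpose_apply, Bmat, Bbarmat, Matrix.of_apply, Polynomial.finsetSum_coeff,
    aux_coeff]
  rw [Finset.sum_coe_sort (blockIdx m k) (fun a => ∑ t ∈ Finset.range (m + 1),
      (if t ≤ s ∧ s - t ≤ m then Centry m P t a b'.1 * Dentry m P (s - t) a b.1 else 0)),
    aux_entry m hm N hN k l hbasis P hP b.1 b'.1 b.2 b'.2 s]
  rw [Matrix.smul_apply, Matrix.one_apply, smul_eq_mul]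
  by_cases h : b' = b
  · simp [h, Polynomial.coeff_X_pow]
  · have : ¬ (b'.1 = b.1) := fun e => h (Subtype.ext e)
    simp [h, this]
end

section
/- Let X_0, …, X_m be skew block matrices over F such that for every i and every block position (α,β) with α > m−i or β > i+1, the (α,β)-th block of X_i equals the (α,β)-th block of D_i (the blocks of X_i at positions with α ≤ m−i and β ≤ i+1 are arbitrary). If Bᵗ · (Σ_{i=0}^{m} X_i N^i) lies in N^m · M_r(F[N]), then Σ_{i=0}^{m} X_i N^i = B̄. (Lemma 3.33 of the paper.) -/
open Matrix

theorem sb_centry {F : Type*} [Field F] (m : ℕ) (P : ℕ → ℕ → ℕ → ℕ → ℕ → ℕ → F)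
    (t α i u j : ℕ) (ht : t < m) (hu : 1 ≤ u) (hum : u ≤ m) :
    Centry m P t ⟨α, i⟩ ⟨m + 2 - u, j⟩ =
      (if t = u - 1 then (if α = u then (if i = j then 1 else 0) else 0) else 0) +
      (if u - 1 ≤ t then (if t + 2 ≤ α then P u (u - 1) α t j i else 0) else 0) := by
  have e1 : m + 2 - (m + 2 - u) = u := by omega
  have e2 : m + 1 - (m + 2 - u) = u - 1 := by omega
  unfold Centry
  simp only [e1, e2]
  by_cases h1 : α = t + 1 ∧ m + 2 - u = m + 1 - t
  · have a1 : t = u - 1 := by omega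
    have a2 : α = u := by omega
    have a3 : ¬ (t + 2 ≤ α) := by omega
    rw [if_pos h1, if_pos a1, if_pos a2, if_neg a3]
    simp
  · rw [if_neg h1]
    have z1 : (if t = u - 1 then (if α = u then (if i = j then (1 : F) else 0) else 0) else 0) = 0 := by
      by_cases a1 : t = u - 1
      · rw [if_pos a1, if_neg (by omega)]
      · rw [if_neg a1]
    rw [z1, zero_add]
    by_cases a1 : u - 1 ≤ t
    · by_cases a2 : t + 2 ≤ α
      · rw [if_pos a1, if_pos a2, if_pos (by omega)]
      · rw [if_pos a1, if_neg a2, if_neg (by omega)]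
    · rw [if_neg a1, if_neg (by omega)]

theorem sb_sum {F : Type*} [Field F] (m : ℕ) (k : ℕ → ℕ) (P : ℕ → ℕ → ℕ → ℕ → ℕ → ℕ → F)
    (Y : ℕ → ((_ : ℕ) × ℕ) → F) (s u j : ℕ) (hs : s < m) (hu : 1 ≤ u) (hus : u - 1 ≤ s)
    (hj : j ∈ Finset.Icc 1 (k u)) :
    ∑ a ∈ blockIdx m k, ∑ t ∈ Finset.range (s + 1), Centry m P t a ⟨m + 2 - u, j⟩ * Y (s - t) a =
      Y (s - (u - 1)) ⟨u, j⟩ +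
      ∑ t ∈ Finset.Icc (u - 1) s, ∑ α ∈ Finset.Icc (t + 2) (m + 1), ∑ i ∈ Finset.Icc 1 (k α),
        P u (u - 1) α t j i * Y (s - t) ⟨α, i⟩ := by
  rw [Finset.sum_comm]
  have hum : u ≤ m := by omega
  have hE : ∀ t ∈ Finset.range (s + 1), ∑ a ∈ blockIdx m k, Centry m P t a ⟨m + 2 - u, j⟩ * Y (s - t) a
      = (if t = u - 1 then Y (s - t) ⟨u, j⟩ else 0) +
        (if u - 1 ≤ t then ∑ α ∈ Finset.Icc (t + 2) (m + 1), ∑ i ∈ Finset.Icc 1 (k α),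
        P u (u - 1) α t j i * Y (s - t) ⟨α, i⟩ else 0) := by
    intro t ht
    have ht' : t < m := by have := Finset.mem_range.1 ht; omega
    rw [blockIdx, Finset.sum_sigma]
    simp only [sb_centry m P t _ _ u j ht' hu hum, add_mul, Finset.sum_add_distrib]
    congr 1
    · by_cases h : t = u - 1
      · simp only [if_pos h]
        rw [Finset.sum_eq_single_of_mem u (Finset.mem_Icc.2 ⟨hu, by omega⟩)]
        · rw [Finset.sum_eq_single_of_mem j hj]
          · simp
          · intro b _ hb; simp [hb]
        · intro b _ hb; simp [hb]
      · simp [h]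
    · by_cases h : u - 1 ≤ t
      · simp only [if_pos h]
        symm
        have hsub : Finset.Icc (t + 2) (m + 1) ⊆ Finset.Icc 1 (m + 1) :=
          Finset.Icc_subset_Icc (by omega) le_rfl
        rw [← Finset.sum_subset hsub]
        · refine Finset.sum_congr rfl fun α hα => ?_
          simp only [if_pos (Finset.mem_Icc.1 hα).1]
        · intro α h1 h2
          have : ¬ (t + 2 ≤ α) := by
            rw [Finset.mem_Icc] at h1 h2; omega
          simp [this]
      · simp [h]
  rw [Finset.sum_congr rfl hE, Finset.sum_add_distrib]
  congr 1
  · rw [Finset.sum_ite_eq' (Finset.range (s + 1)) (u - 1), if_pos (Finset.mem_range.2 (by omega))]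
  · rw [← Finset.sum_filter]
    refine Finset.sum_congr ?_ fun _ _ => rfl
    ext t
    simp only [Finset.mem_filter, Finset.mem_range, Finset.mem_Icc]
    omega

theorem sb_functional {F : Type*} [Field F] {V : Type*} [AddCommGroup V] [Module F V]
    (m : ℕ) (hm : 1 ≤ m) (N : Module.End F V)
    (k : ℕ → ℕ) (l : ℕ → ℕ → V) (hbasis : IsSiegelBasis F m k N l)
    (P : ℕ → ℕ → ℕ → ℕ → ℕ → ℕ → F) (hP : SatisfiesP m k N l P)
    (b : (_ : ℕ) × ℕ) (hb : b ∈ dualBlockIdx m k) :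
    ∃ φ : V →ₗ[F] F, ∀ i < m, ∀ a ∈ blockIdx m k,
      Dentry m P i a b = φ ((N ^ (m - 1 - i)) (l a.1 a.2)) := by
  obtain ⟨β, j⟩ := b
  simp only [dualBlockIdx, Finset.mem_sigma, Finset.mem_Icc] at hb
  obtain ⟨⟨hb1, hb2⟩, hj1, hj2⟩ := hb
  by_cases hβ : β = m + 1
  · refine ⟨0, fun i hi a _ => ?_⟩
    unfold Dentry
    rw [if_neg (by omega), if_neg (by simp only; omega)]
    simp
  obtain ⟨hli, hsp⟩ := hbasis 0 (by omega)
  have hmem : ((m - β, m + 2 - β, j) : ℕ × ℕ × ℕ) ∈ siegelIdxSet m k 0 := by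
    simp only [siegelIdxSet, Set.mem_ofPred_eq]
    refine ⟨by omega, by omega, by omega, by omega, hj1, hj2⟩
  have hsp' : ⊤ ≤ Submodule.span F (Set.range
      (fun p : siegelIdxSet m k 0 => (N ^ p.val.1) (l p.val.2.1 p.val.2.2))) := by
    rw [Set.image_eq_range] at hsp
    refine le_of_eq (Eq.trans ?_ hsp.symm)
    rw [pow_zero]
    exact (LinearMap.range_id).symm
  let B := Module.Basis.mk hli hsp'
  have hφ : ∀ z y i, (z, y, i) ∈ siegelIdxSet m k 0 →
      B.coord ⟨_, hmem⟩ ((N ^ z) (l y i)) =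
        if z = m - β then (if y = m + 2 - β then (if i = j then 1 else 0) else 0) else 0 := by
    intro z y i h
    have : (N ^ z) (l y i) = B ⟨(z, y, i), h⟩ := by simp [B]
    rw [this, Module.Basis.coord_apply, Module.Basis.repr_self, Finsupp.single_apply]
    simp only [Subtype.mk.injEq, Prod.mk.injEq, ite_and]
  refine ⟨B.coord ⟨_, hmem⟩, fun i hi a ha => ?_⟩
  obtain ⟨α, x⟩ := a
  simp only [blockIdx, Finset.mem_sigma] at ha
  rw [hP α ha.1 (m - 1 - i) (Finset.mem_Icc.2 ⟨by omega, by omega⟩) x ha.2]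
  simp only [map_neg, map_sum, map_smul, smul_eq_mul]
  have hE : ∀ z ∈ Finset.Icc (m - 1 - i) (m - 1),
      ∑ y ∈ Finset.Icc (z + 2) (m + 1), ∑ q ∈ Finset.Icc 1 (k y),
        P α (m - 1 - i) y z x q * B.coord ⟨_, hmem⟩ ((N ^ z) (l y q)) =
      if z = m - β then P α (m - 1 - i) (m + 2 - β) z x j else 0 := by
    intro z hz
    rw [Finset.mem_Icc] at hz
    have : ∀ y ∈ Finset.Icc (z + 2) (m + 1), ∑ q ∈ Finset.Icc 1 (k y),
        P α (m - 1 - i) y z x q * B.coord ⟨_, hmem⟩ ((N ^ z) (l y q)) =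
        ∑ q ∈ Finset.Icc 1 (k y),
        P α (m - 1 - i) y z x q * 
        if z = m - β then (if y = m + 2 - β then (if q = j then 1 else 0) else 0) else 0 := by
      intro y hy
      refine Finset.sum_congr rfl fun q hq => ?_
      rw [Finset.mem_Icc] at hy hq
      rw [hφ z y q ⟨by omega, hz.2, hy.1, hy.2, hq.1, hq.2⟩]
    rw [Finset.sum_congr rfl this]
    by_cases h : z = m - β
    · simp only [if_pos h]
      rw [Finset.sum_eq_single_of_mem (m + 2 - β) (Finset.mem_Icc.2 ⟨by omega, by omega⟩)]
      · rw [Finset.sum_eq_single_of_mem j (Finset.mem_Icc.2 ⟨hj1, hj2⟩)]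
        · simp
        · intro q _ hq; simp [hq]
      · intro y _ hy; simp [hy]
    · simp [h]
  rw [Finset.sum_congr rfl hE, Finset.sum_ite_eq']
  unfold Dentry
  rw [if_neg (by omega)]
  simp only [Finset.mem_Icc]
  by_cases h : β ≤ i + 1
  · rw [if_pos h, if_pos (by omega)]
  · rw [if_neg h, if_neg (by omega), neg_zero]

/-- The matrix `D` satisfies the recursion. -/
theorem sb_D {F : Type*} [Field F] {V : Type*} [AddCommGroup V] [Module F V]
    (m : ℕ) (hm : 1 ≤ m) (N : Module.End F V) (hN : N ^ m = 0)
    (k : ℕ → ℕ) (l : ℕ → ℕ → V) (hbasis : IsSiegelBasis F m k N l)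
    (P : ℕ → ℕ → ℕ → ℕ → ℕ → ℕ → F) (hP : SatisfiesP m k N l P)
    (b : (_ : ℕ) × ℕ) (hb : b ∈ dualBlockIdx m k)
    (s u j : ℕ) (hs : s < m) (hu : 1 ≤ u) (hus : u - 1 ≤ s)
    (hj : j ∈ Finset.Icc 1 (k u)) :
      Dentry m P (s - (u - 1)) ⟨u, j⟩ b +
      ∑ t ∈ Finset.Icc (u - 1) s, ∑ α ∈ Finset.Icc (t + 2) (m + 1), ∑ i ∈ Finset.Icc 1 (k α),
        P u (u - 1) α t j i * Dentry m P (s - t) ⟨α, i⟩ b = 0 := by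
  obtain ⟨φ, hφ⟩ := sb_functional m hm N k l hbasis P hP b hb
  have hpow : ∀ t, (t ≤ s → ∀ v, (N ^ (m - 1 - s)) ((N ^ t) v) = (N ^ (m - 1 - (s - t))) v) := by
    intro t ht v
    rw [← Module.End.mul_apply, ← pow_add]
    congr 2
    omega
  have hpow0 : ∀ t, s < t → ∀ v, (N ^ (m - 1 - s)) ((N ^ t) v) = 0 := by
    intro t ht v
    rw [← Module.End.mul_apply, ← pow_add, pow_eq_zero_of_le (by omega) hN]
    rfl
  have key := hP u (Finset.mem_Icc.2 ⟨hu, by omega⟩) (u - 1) (Finset.mem_Icc.2 ⟨by omega, by omega⟩) j hj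
  rw [eq_neg_iff_add_eq_zero] at key
  have key2 := congrArg (fun v => φ ((N ^ (m - 1 - s)) v)) key
  simp only [map_add, map_sum, map_smul, map_zero, smul_eq_mul] at key2
  rw [hpow _ hus] at key2
  rw [hφ _ (by omega) _ (by simp only [blockIdx, Finset.mem_sigma]; exact ⟨Finset.mem_Icc.2 ⟨hu, by omega⟩, hj⟩)]
  refine Eq.trans ?_ key2
  congr 1
  have hsub : Finset.Icc (u - 1) s ⊆ Finset.Icc (u - 1) (m - 1) :=
    Finset.Icc_subset_Icc le_rfl (by omega)
  rw [← Finset.sum_subset hsub]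
  · refine Finset.sum_congr rfl fun t ht => Finset.sum_congr rfl fun α hα =>
      Finset.sum_congr rfl fun i hi => ?_
    rw [Finset.mem_Icc] at ht hα
    rw [hφ _ (by omega) _ (by
      simp only [blockIdx, Finset.mem_sigma]
      exact ⟨Finset.mem_Icc.2 ⟨by omega, by omega⟩, hi⟩), hpow t ht.2]
  · intro t h1 h2
    rw [Finset.mem_Icc] at h1 h2
    simp [hpow0 t (by omega)]

theorem sb_coeff {F : Type*} [Field F] (m n : ℕ) (hn : n ≤ m) (x : ℕ → F) :
    (∑ i ∈ Finset.range (m + 1), Polynomial.C (x i) * Polynomial.X ^ i).coeff n = x n := by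
  simp only [Polynomial.finsetSum_coeff, Polynomial.coeff_C_mul_X_pow]
  rw [Finset.sum_ite_eq, if_pos (Finset.mem_range.2 (by omega))]

/-- Lemma 3.33 of the paper: if `X_0, …, X_m` are skew block matrices
agreeing with `D_i = C̄_i` on all blocks `(α,β)` with `α > m-i` or `β > i+1`, and if
`Bᵗ ⬝ (Σ_i X_i N^i) ∈ N^m M_r(F[N])`, then `Σ_i X_i N^i = B̄`. -/
theorem stmt_1 {F : Type*} [Field F] {V : Type*} [AddCommGroup V] [Module F V]
    [FiniteDimensional F V]
    (m : ℕ) (hm : 1 ≤ m) (N : Module.End F V) (hN : N ^ m = 0)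
    (k : ℕ → ℕ) (l : ℕ → ℕ → V) (hbasis : IsSiegelBasis F m k N l)
    (P : ℕ → ℕ → ℕ → ℕ → ℕ → ℕ → F) (hP : SatisfiesP m k N l P)
    (Xm : ℕ → ((_ : ℕ) × ℕ) → ((_ : ℕ) × ℕ) → F)
    (hXm : ∀ i ≤ m, ∀ a ∈ blockIdx m k, ∀ b ∈ dualBlockIdx m k,
      (m - i < a.1 ∨ i + 1 < b.1) → Xm i a b = Dentry m P i a b)
    (hdvd : ∀ (a b : {p // p ∈ dualBlockIdx m k}),
      (Polynomial.X : Polynomial F) ^ m ∣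
        (((Bmat m k P)ᵀ *
          Matrix.of (fun (a : {p // p ∈ blockIdx m k}) (b : {p // p ∈ dualBlockIdx m k}) =>
            ∑ i ∈ Finset.range (m + 1), Polynomial.C (Xm i a.1 b.1) * Polynomial.X ^ i) :
          Matrix {p // p ∈ dualBlockIdx m k} {p // p ∈ dualBlockIdx m k} (Polynomial F)) a b)) :
    (Matrix.of (fun (a : {p // p ∈ blockIdx m k}) (b : {p // p ∈ dualBlockIdx m k}) =>
        ∑ i ∈ Finset.range (m + 1), Polynomial.C (Xm i a.1 b.1) * Polynomial.X ^ i)) =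
      Bbarmat m k P := by
  have hrec : ∀ b ∈ dualBlockIdx m k, ∀ s u j, s < m → 1 ≤ u → u - 1 ≤ s →
      j ∈ Finset.Icc 1 (k u) →
      Xm (s - (u - 1)) ⟨u, j⟩ b +
      ∑ t ∈ Finset.Icc (u - 1) s, ∑ α ∈ Finset.Icc (t + 2) (m + 1), ∑ i ∈ Finset.Icc 1 (k α),
        P u (u - 1) α t j i * Xm (s - t) ⟨α, i⟩ b = 0 := by
    intro b hb s u j hs hu hus hj
    rw [← sb_sum m k P (fun i a => Xm i a b) s u j hs hu hus hj]
    have hc : (⟨m + 2 - u, j⟩ : (_ : ℕ) × ℕ) ∈ dualBlockIdx m k := by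
      simp only [dualBlockIdx, Finset.mem_sigma]
      refine ⟨Finset.mem_Icc.2 ⟨by omega, by omega⟩, ?_⟩
      rwa [show m + 2 - (m + 2 - u) = u by omega]
    have h := Polynomial.X_pow_dvd_iff.1 (hdvd ⟨_, hc⟩ ⟨b, hb⟩) s hs
    rw [Matrix.mul_apply, Polynomial.finsetSum_coeff] at h
    rw [← h, ← Finset.sum_coe_sort]
    refine Finset.sum_congr rfl fun a _ => ?_
    rw [Polynomial.coeff_mul, Finset.Nat.sum_antidiagonal_eq_sum_range_succ_mk]
    refine Finset.sum_congr rfl fun t ht => ?_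
    rw [Finset.mem_range] at ht
    simp only [Bmat, Matrix.transpose_apply, Matrix.of_apply]
    rw [sb_coeff m t (by omega), sb_coeff m (s - t) (by omega)]
  have main : ∀ b ∈ dualBlockIdx m k, ∀ i, i ≤ m → ∀ d, ∀ u j, u + d = m + 1 → 1 ≤ u →
      j ∈ Finset.Icc 1 (k u) → Xm i ⟨u, j⟩ b = Dentry m P i ⟨u, j⟩ b := by
    intro b hb i
    induction i using Nat.strong_induction_on with
    | _ i ih =>
    intro hi d
    induction d using Nat.strong_induction_on with
    | _ d ihd =>
    intro u j hud hu hj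
    by_cases hlt : m - i < u
    · refine hXm i hi _ ?_ b hb (Or.inl hlt)
      simp only [blockIdx, Finset.mem_sigma]
      exact ⟨Finset.mem_Icc.2 ⟨hu, by omega⟩, hj⟩
    have h1 := hrec b hb (i + (u - 1)) u j (by omega) hu (by omega) hj
    have h2 := sb_D m hm N hN k l hbasis P hP b hb (i + (u - 1)) u j (by omega) hu (by omega) hj
    rw [Nat.add_sub_cancel] at h1 h2
    have h3 : ∑ t ∈ Finset.Icc (u - 1) (i + (u - 1)), ∑ α ∈ Finset.Icc (t + 2) (m + 1),
        ∑ q ∈ Finset.Icc 1 (k α),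
          P u (u - 1) α t j q * Xm (i + (u - 1) - t) ⟨α, q⟩ b =
        ∑ t ∈ Finset.Icc (u - 1) (i + (u - 1)), ∑ α ∈ Finset.Icc (t + 2) (m + 1),
        ∑ q ∈ Finset.Icc 1 (k α),
          P u (u - 1) α t j q * Dentry m P (i + (u - 1) - t) ⟨α, q⟩ b := by
      refine Finset.sum_congr rfl fun t ht => Finset.sum_congr rfl fun α hα =>
        Finset.sum_congr rfl fun q hq => ?_
      rw [Finset.mem_Icc] at ht hα
      congr 1
      by_cases h : t = u - 1
      · rw [h, Nat.add_sub_cancel]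
        exact ihd (m + 1 - α) (by omega) α q (by omega) (by omega) hq
      · exact ih _ (by omega) (by omega) (m + 1 - α) α q (by omega) (by omega) hq
    rw [h3] at h1
    exact add_right_cancel (h1.trans h2.symm)
  ext1 a b
  simp only [Bbarmat, Matrix.of_apply]
  refine Finset.sum_congr rfl fun i hi => ?_
  obtain ⟨⟨u, j⟩, ha⟩ := a
  simp only [blockIdx, Finset.mem_sigma] at ha
  have hu := Finset.mem_Icc.1 ha.1
  rw [main b.1 b.2 i (by have := Finset.mem_range.1 hi; omega) (m + 1 - u) u j
    (by omega) hu.1 ha.2]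
end

section
/- For all integers i ∈ [2, m+1], j ∈ [1, m−i+2], ξ ∈ [m−j, m−1] and ψ ∈ [ξ+2, m+1], the following identity of k_{i−1} × k_ψ matrices over F holds: (Σ_{β=0}^{j+ξ−m} Σ_{α=i+β}^{m+1−j+β} S_{i−1, i−2, α, i−2+β} · P_{α, m−j+β, ψ, ξ}) − S_{i−1, i−2, ψ, i−2+ξ+j−m} + P_{i−1, m−j, ψ, ξ} = 0. (Lemma 3.25 of the paper, the recurrent formula for the matrices P.) -/
/-- Coordinate functional dual to one vector of a linearly independent family. -/
theorem exists_dual_aux {F : Type*} [Field F] {V : Type*} [AddCommGroup V] [Module F V]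
    {ι : Type*} [DecidableEq ι] (v : ι → V) (hv : LinearIndependent F v) (x : ι) :
    ∃ φ : V →ₗ[F] F, ∀ y, φ (v y) = if y = x then 1 else 0 := by
  obtain ⟨g, hg⟩ := hv.repr.exists_extend
  refine ⟨(Finsupp.lapply x).comp g, fun y => ?_⟩
  have h1 : g (v y) = hv.repr ⟨v y, Submodule.subset_span (Set.mem_range_self y)⟩ :=
    LinearMap.congr_fun hg ⟨v y, Submodule.subset_span (Set.mem_range_self y)⟩
  rw [LinearMap.comp_apply, h1, hv.repr_eq_single y _ rfl]
  simp [Finsupp.single_apply]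

/-- Sums against a Kronecker delta over a triple range. -/
theorem triple_sum_aux {F : Type*} [Field F] (A : Finset ℕ) (B : ℕ → Finset ℕ)
    (C : ℕ → Finset ℕ) (f : ℕ → ℕ → ℕ → F) (x y c : ℕ) (hy : y ∈ B x) (hc : c ∈ C y) :
    ∑ z ∈ A, ∑ t ∈ B z, ∑ s ∈ C t, f z t s * (if z = x ∧ t = y ∧ s = c then 1 else 0)
      = if x ∈ A then f x y c else 0 := by
  have h : ∀ z ∈ A, ∑ t ∈ B z, ∑ s ∈ C t,
      f z t s * (if z = x ∧ t = y ∧ s = c then 1 else 0) = if z = x then f x y c else 0 := by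
    intro z _
    split_ifs with hz
    · subst hz
      rw [Finset.sum_eq_single_of_mem y hy, Finset.sum_eq_single_of_mem c hc]
      · simp
      · intro s _ hs; simp [hs]
      · intro t _ ht; simp [ht]
    · simp [hz]
  rw [Finset.sum_congr rfl h]
  simp


/-- Lemma 3.25 of the paper, the recurrent formula for the matrices `P`:
for `i ∈ [2, m+1]`, `j ∈ [1, m-i+2]`, `ξ ∈ [m-j, m-1]`, `ψ ∈ [ξ+2, m+1]`,
`(Σ_{β=0}^{j+ξ-m} Σ_{α=i+β}^{m+1-j+β} S_{i-1,i-2,α,i-2+β} P_{α,m-j+β,ψ,ξ})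
  − S_{i-1,i-2,ψ,i-2+ξ+j-m} + P_{i-1,m-j,ψ,ξ} = 0`,
where `S_{u,u-1,y,z} = P_{u,u-1,y,z}` is the Siegel object. -/
theorem stmt_5 {F : Type*} [Field F] {V : Type*} [AddCommGroup V] [Module F V]
    [FiniteDimensional F V]
    (m : ℕ) (hm : 1 ≤ m) (N : Module.End F V) (hN : N ^ m = 0)
    (k : ℕ → ℕ) (l : ℕ → ℕ → V) (hbasis : IsSiegelBasis F m k N l)
    (P : ℕ → ℕ → ℕ → ℕ → ℕ → ℕ → F) (hP : SatisfiesP m k N l P) :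
    ∀ i ∈ Finset.Icc 2 (m + 1), ∀ j ∈ Finset.Icc 1 (m + 2 - i),
      ∀ ξ ∈ Finset.Icc (m - j) (m - 1), ∀ ψ ∈ Finset.Icc (ξ + 2) (m + 1),
        ∀ a ∈ Finset.Icc 1 (k (i - 1)), ∀ b ∈ Finset.Icc 1 (k ψ),
          (∑ β ∈ Finset.Icc 0 (j + ξ - m), ∑ α ∈ Finset.Icc (i + β) (m + 1 - j + β),
              ∑ c ∈ Finset.Icc 1 (k α),
                P (i - 1) (i - 2) α (i - 2 + β) a c * P α (m - j + β) ψ ξ c b)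
            - P (i - 1) (i - 2) ψ (i - 2 + (ξ + j - m)) a b
            + P (i - 1) (m - j) ψ ξ a b = 0 := by
  intro i hi j hj ξ hξ ψ hψ a ha b hb
  simp only [Finset.mem_Icc] at hi hj hξ hψ
  obtain ⟨i', rfl⟩ : ∃ i', i = i' + 2 := ⟨i - 2, by omega⟩
  obtain ⟨d, rfl⟩ : ∃ d, m = d + j := ⟨m - j, by omega⟩
  obtain ⟨w, rfl⟩ : ∃ w, d = i' + w := ⟨d - i', by omega⟩
  obtain ⟨e, rfl⟩ : ∃ e, ξ = i' + w + e := ⟨ξ - (i' + w), by omega⟩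
  have e1 : i' + 2 - 1 = i' + 1 := by omega
  have e2 : i' + 2 - 2 = i' := by omega
  have e3 : i' + w + j - j = i' + w := by omega
  have e4 : j + (i' + w + e) - (i' + w + j) = e := by omega
  have e5 : i' + w + e + j - (i' + w + j) = e := by omega
  have e6 : i' + w + j + 1 - j = i' + w + 1 := by omega
  rw [e1] at ha
  rw [e3] at hξ
  simp only [e1, e2, e3, e4, e5, e6]
  obtain ⟨φ, hφ⟩ : ∃ φ : V →ₗ[F] F, ∀ z y c, i' + w ≤ z → z ≤ i' + w + j - 1 → z + 2 ≤ y →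
      y ≤ i' + w + j + 1 → c ∈ Finset.Icc 1 (k y) →
      φ ((N ^ z) (l y c)) = if z = i' + w + e ∧ y = ψ ∧ c = b then 1 else 0 := by
    classical
    rw [Finset.mem_Icc] at hb
    obtain ⟨φ, hφ⟩ := exists_dual_aux _ (hbasis (i' + w) (by omega)).1
      ⟨(i' + w + e, ψ, b), by
        refine ⟨?_, ?_, ?_, ?_, ?_, ?_⟩ <;> dsimp only <;> omega⟩
    refine ⟨φ, fun z y c h1 h2 h3 h4 h5 => ?_⟩
    rw [Finset.mem_Icc] at h5
    have := hφ ⟨(z, y, c), ⟨h1, h2, h3, h4, h5.1, h5.2⟩⟩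
    simpa [Subtype.ext_iff, Prod.ext_iff] using this
  have hval : ∀ v u c, i' + w ≤ v → v ≤ i' + w + j - 1 → 1 ≤ u → u ≤ i' + w + j + 1 →
      c ∈ Finset.Icc 1 (k u) →
      φ ((N ^ v) (l u c)) = -(if v ≤ i' + w + e then P u v ψ (i' + w + e) c b else 0) := by
    intro v u c h1 h2 h3 h4 h5
    rw [hP u (Finset.mem_Icc.2 ⟨h3, h4⟩) v (Finset.mem_Icc.2 ⟨Nat.zero_le _, h2⟩) c h5]
    rw [map_neg]
    simp only [map_sum, map_smul, smul_eq_mul]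
    have key := triple_sum_aux (Finset.Icc v (i' + w + j - 1))
      (fun z => Finset.Icc (z + 2) (i' + w + j + 1)) (fun y => Finset.Icc 1 (k y))
      (fun z y s => P u v y z c s) (i' + w + e) ψ b (Finset.mem_Icc.2 hψ) hb
    have hiff : (i' + w + e ∈ Finset.Icc v (i' + w + j - 1)) ↔ v ≤ i' + w + e := by
      rw [Finset.mem_Icc]; omega
    simp only [hiff] at key
    rw [← key]
    congr 1
    refine Finset.sum_congr rfl fun z hz => Finset.sum_congr rfl fun y hy =>
      Finset.sum_congr rfl fun s hs => ?_
    rw [Finset.mem_Icc] at hz hy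
    rw [hφ z y s (by omega) hz.2 hy.1 hy.2 hs]
  have hbig : ∀ v u c, i' + w + e < v → 1 ≤ u → u ≤ i' + w + j + 1 →
      c ∈ Finset.Icc 1 (k u) → φ ((N ^ v) (l u c)) = 0 := by
    intro v u c h1 h3 h4 h5
    by_cases h2 : v ≤ i' + w + j - 1
    · rw [hval v u c (by omega) h2 h3 h4 h5, if_neg (by omega), neg_zero]
    · rw [pow_eq_zero_of_le (by omega) hN]; simp
  have hA := hval (i' + w) (i' + 1) a le_rfl (by omega) (by omega) (by omega) ha
  rw [if_pos (by omega)] at hA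
  have hB := hP (i' + 1) (Finset.mem_Icc.2 ⟨by omega, by omega⟩) i'
    (Finset.mem_Icc.2 ⟨by omega, by omega⟩) a ha
  have hC : φ ((N ^ (i' + w)) (l (i' + 1) a)) = -∑ z ∈ Finset.Icc i' (i' + w + j - 1),
      ∑ y ∈ Finset.Icc (z + 2) (i' + w + j + 1), ∑ c ∈ Finset.Icc 1 (k y),
        P (i' + 1) i' y z a c * φ ((N ^ (w + z)) (l y c)) := by
    rw [add_comm i' w, pow_add, Module.End.mul_apply, hB]
    simp only [map_neg, map_sum, map_smul, smul_eq_mul, pow_add, Module.End.mul_apply,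
      add_comm w i']
  have hD : ∑ z ∈ Finset.Icc i' (i' + w + j - 1),
      ∑ y ∈ Finset.Icc (z + 2) (i' + w + j + 1), ∑ c ∈ Finset.Icc 1 (k y),
        P (i' + 1) i' y z a c * φ ((N ^ (w + z)) (l y c)) =
      ∑ β ∈ Finset.Icc 0 e,
      ∑ y ∈ Finset.Icc (i' + β + 2) (i' + w + j + 1), ∑ c ∈ Finset.Icc 1 (k y),
        P (i' + 1) i' y (i' + β) a c * φ ((N ^ (w + (i' + β))) (l y c)) := by
    symm
    have hm' := Finset.sum_map (Finset.Icc 0 e) (addLeftEmbedding i') (fun z =>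
      ∑ y ∈ Finset.Icc (z + 2) (i' + w + j + 1), ∑ c ∈ Finset.Icc 1 (k y),
        P (i' + 1) i' y z a c * φ ((N ^ (w + z)) (l y c)))
    simp only [addLeftEmbedding_apply] at hm'
    rw [← hm', Finset.map_add_left_Icc]
    refine Finset.sum_subset (Finset.Icc_subset_Icc (by omega) (by omega)) ?_
    intro z hz hz'
    rw [Finset.mem_Icc] at hz hz'
    refine Finset.sum_eq_zero fun y hy => Finset.sum_eq_zero fun c hc => ?_
    rw [Finset.mem_Icc] at hy
    rw [hbig (w + z) y c (by omega) (by omega) (by omega) hc, mul_zero]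
  have hE : ∀ β ∈ Finset.Icc 0 e,
      ∑ y ∈ Finset.Icc (i' + β + 2) (i' + w + j + 1), ∑ c ∈ Finset.Icc 1 (k y),
        P (i' + 1) i' y (i' + β) a c * φ ((N ^ (w + (i' + β))) (l y c)) =
      -(∑ y ∈ Finset.Icc (i' + 2 + β) (i' + w + 1 + β), ∑ c ∈ Finset.Icc 1 (k y),
        P (i' + 1) i' y (i' + β) a c * P y (i' + w + β) ψ (i' + w + e) c b) +
      ∑ y ∈ Finset.Icc (i' + w + β + 2) (i' + w + j + 1), ∑ c ∈ Finset.Icc 1 (k y),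
        P (i' + 1) i' y (i' + β) a c * (if β = e ∧ y = ψ ∧ c = b then 1 else 0) := by
    intro β hβ
    rw [Finset.mem_Icc] at hβ
    have hu : Finset.Icc (i' + β + 2) (i' + w + j + 1) =
        Finset.Icc (i' + 2 + β) (i' + w + 1 + β) ∪
          Finset.Icc (i' + w + β + 2) (i' + w + j + 1) := by
      ext x; simp only [Finset.mem_union, Finset.mem_Icc]; omega
    have hd : Disjoint (Finset.Icc (i' + 2 + β) (i' + w + 1 + β))
          (Finset.Icc (i' + w + β + 2) (i' + w + j + 1)) := by
      rw [Finset.disjoint_left]; intro x; simp only [Finset.mem_Icc]; omega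
    have hv : w + (i' + β) = i' + w + β := by omega
    rw [hu, Finset.sum_union hd, hv]
    congr 1
    · simp only [← Finset.sum_neg_distrib]
      refine Finset.sum_congr rfl fun y hy => Finset.sum_congr rfl fun c hc => ?_
      rw [Finset.mem_Icc] at hy
      rw [hval _ y c (by omega) (by omega) (by omega) (by omega) hc, if_pos (by omega), mul_neg]
    · refine Finset.sum_congr rfl fun y hy => Finset.sum_congr rfl fun c hc => ?_
      rw [Finset.mem_Icc] at hy
      rw [hφ _ y c (by omega) (by omega) (by omega) (by omega) hc]
      simp only [Nat.add_left_cancel_iff]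
  have hG := triple_sum_aux (Finset.Icc 0 e)
      (fun β => Finset.Icc (i' + w + β + 2) (i' + w + j + 1)) (fun y => Finset.Icc 1 (k y))
      (fun β y c => P (i' + 1) i' y (i' + β) a c) e ψ b (Finset.mem_Icc.2 hψ) hb
  rw [if_pos (Finset.mem_Icc.2 ⟨Nat.zero_le _, le_rfl⟩)] at hG
  rw [hD, Finset.sum_congr rfl hE, Finset.sum_add_distrib, hG, Finset.sum_neg_distrib, hA] at hC
  linear_combination -hC
end

section
/- 𝔓 is the inverse of 𝔖, i.e. 𝔖·𝔓 = 𝔓·𝔖 = I_r. (Remark 3.24.B of the paper.) -/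
/-- The block unitriangular matrix `𝔖` of Remark 3.24.B: the `(i,j)`-th block is
`S_{i,i-1,j,i-1}` for `j > i`, `I_{k_i}` for `j = i` and `0` for `j < i`. -/
def frakS {F : Type*} [Field F] (m : ℕ) (k : ℕ → ℕ) (P : ℕ → ℕ → ℕ → ℕ → ℕ → ℕ → F) :
    Matrix {p // p ∈ blockIdx m k} {p // p ∈ blockIdx m k} F :=
  Matrix.of fun a b =>
    if a.1.1 = b.1.1 then (if a.1.2 = b.1.2 then 1 else 0)
    else if a.1.1 < b.1.1 then P a.1.1 (a.1.1 - 1) b.1.1 (a.1.1 - 1) a.1.2 b.1.2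
    else 0

/-- The block unitriangular matrix `𝔓` of Remark 3.24.B: the `(i,j)`-th block is
`-P_{i,j-2,j,j-2}` for `j > i`, `I_{k_i}` for `j = i` and `0` for `j < i`. -/
def frakP {F : Type*} [Field F] (m : ℕ) (k : ℕ → ℕ) (P : ℕ → ℕ → ℕ → ℕ → ℕ → ℕ → F) :
    Matrix {p // p ∈ blockIdx m k} {p // p ∈ blockIdx m k} F :=
  Matrix.of fun a b =>
    if a.1.1 = b.1.1 then (if a.1.2 = b.1.2 then 1 else 0)
    else if a.1.1 < b.1.1 then -P a.1.1 (b.1.1 - 2) b.1.1 (b.1.1 - 2) a.1.2 b.1.2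
    else 0

/-- The functional dual to `N^{w-2} l_{w,h}`. -/
theorem exists_functional {F : Type*} [Field F] {V : Type*} [AddCommGroup V] [Module F V]
    (m : ℕ) (hm : 1 ≤ m) (N : Module.End F V) (hN : N ^ m = 0)
    (k : ℕ → ℕ) (l : ℕ → ℕ → V) (hbasis : IsSiegelBasis F m k N l)
    (w h : ℕ) (hw : 2 ≤ w) (hwm : w ≤ m + 1) (h1 : 1 ≤ h) (hk : h ≤ k w) :
    ∃ φ : V →ₗ[F] F,
      (∀ α β γ, α ≤ m - 1 → α + 2 ≤ β → β ≤ m + 1 → 1 ≤ γ → γ ≤ k β →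
        φ ((N ^ α) (l β γ)) = if α = w - 2 ∧ β = w ∧ γ = h then 1 else 0) ∧
      (∀ x ∈ LinearMap.range (N ^ (w - 1)), φ x = 0) := by
  obtain ⟨hli, hsp⟩ := hbasis 0 (by omega)
  have hsp' : ⊤ ≤ Submodule.span F (Set.range
      (fun p : siegelIdxSet m k 0 => (N ^ p.val.1) (l p.val.2.1 p.val.2.2))) := by
    have : Set.range (fun p : siegelIdxSet m k 0 => (N ^ p.val.1) (l p.val.2.1 p.val.2.2))
        = (fun p : ℕ × ℕ × ℕ => (N ^ p.1) (l p.2.1 p.2.2)) '' siegelIdxSet m k 0 := by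
      rw [Set.image_eq_range]
    rw [this, hsp, pow_zero]
    intro x _
    exact ⟨x, rfl⟩
  let b := Module.Basis.mk hli hsp'
  let e : siegelIdxSet m k 0 := ⟨(w - 2, w, h), by
    simp only [siegelIdxSet, Set.mem_ofPred_eq]; omega⟩
  have key : ∀ α β γ, α ≤ m - 1 → α + 2 ≤ β → β ≤ m + 1 → 1 ≤ γ → γ ≤ k β →
        b.coord e ((N ^ α) (l β γ)) = if α = w - 2 ∧ β = w ∧ γ = h then 1 else 0 := by
    intro α β γ h1 h2 h3 h4 h5
    let p : siegelIdxSet m k 0 := ⟨(α, β, γ), by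
      simp only [siegelIdxSet, Set.mem_ofPred_eq]; omega⟩
    have hb : (N ^ α) (l β γ) = b p := by
      simp only [b, Module.Basis.mk_apply, p]
    rw [hb, Module.Basis.coord_apply, Module.Basis.repr_self, Finsupp.single_apply]
    congr 1
    simp [p, e]
  refine ⟨b.coord e, key, ?_⟩
  intro x hx
  by_cases hwe : w - 1 < m
  · rw [← (hbasis (w - 1) hwe).2] at hx
    induction hx using Submodule.span_induction with
    | mem x hx =>
      obtain ⟨⟨α, β, γ⟩, hp, rfl⟩ := hx
      simp only [siegelIdxSet, Set.mem_ofPred_eq] at hp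
      obtain ⟨g1, g2, g3, g4, g5, g6⟩ := hp
      rw [key α β γ g2 g3 g4 g5 g6, if_neg]
      omega
    | zero => simp
    | add x y _ _ hx hy => rw [map_add, hx, hy, add_zero]
    | smul a x _ hx => rw [map_smul, hx, smul_zero]
  · have : w - 1 = m := by omega
    rw [this, hN] at hx
    obtain ⟨y, rfl⟩ := hx
    simp

theorem functional_eq {F : Type*} [Field F] {V : Type*} [AddCommGroup V] [Module F V]
    (m : ℕ) (N : Module.End F V) (k : ℕ → ℕ) (l : ℕ → ℕ → V)
    (P : ℕ → ℕ → ℕ → ℕ → ℕ → ℕ → F) (hP : SatisfiesP m k N l P)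
    (c : {p // p ∈ blockIdx m k}) (hw : 2 ≤ c.1.1) (φ : V →ₗ[F] F)
    (hφ : ∀ α β γ, α ≤ m - 1 → α + 2 ≤ β → β ≤ m + 1 → 1 ≤ γ → γ ≤ k β →
        φ ((N ^ α) (l β γ)) = if α = c.1.1 - 2 ∧ β = c.1.1 ∧ γ = c.1.2 then 1 else 0)
    (b : {p // p ∈ blockIdx m k}) :
    φ ((N ^ (c.1.1 - 2)) (l b.1.1 b.1.2)) = frakP m k P b c := by
  obtain ⟨⟨w, h⟩, hc⟩ := c
  obtain ⟨⟨y, j⟩, hb⟩ := b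
  simp only [blockIdx, Finset.mem_sigma, Finset.mem_Icc] at hc hb
  simp only [frakP, Matrix.of_apply]
  simp only at hφ hw
  by_cases hy : w ≤ y
  · rw [hφ _ _ _ (by omega) (by omega) (by omega) (by omega) (by omega)]
    by_cases hyw : y = w
    · simp [hyw]
    · rw [if_neg (by tauto), if_neg hyw, if_neg (by omega)]
  · rw [if_neg (by omega), if_pos (by omega)]
    rw [hP y (by simp; omega) (w - 2) (by simp; omega) j (by simp; omega)]
    rw [map_neg, map_sum]
    congr 1
    rw [Finset.sum_eq_single (w - 2), map_sum, Finset.sum_eq_single w, map_sum,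
      Finset.sum_eq_single h, map_smul, hφ _ _ _ (by omega) (by omega) (by omega) (by omega)
        (by omega)]
    · simp
    · intro j' hj' hne
      simp only [Finset.mem_Icc] at hj'
      rw [map_smul, hφ _ _ _ (by omega) (by omega) (by omega) (by omega) (by omega),
        if_neg (by tauto), smul_zero]
    · intro hh
      simp only [Finset.mem_Icc] at hh
      omega
    · intro y' hy' hne
      simp only [Finset.mem_Icc] at hy'
      rw [map_sum]
      refine Finset.sum_eq_zero fun j' hj' => ?_
      simp only [Finset.mem_Icc] at hj'
      rw [map_smul, hφ _ _ _ (by omega) (by omega) (by omega) (by omega) (by omega),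
        if_neg (by tauto), smul_zero]
    · intro hh
      simp only [Finset.mem_Icc] at hh
      omega
    · intro z hz hne
      simp only [Finset.mem_Icc] at hz
      rw [map_sum]
      refine Finset.sum_eq_zero fun y' hy' => ?_
      simp only [Finset.mem_Icc] at hy'
      rw [map_sum]
      refine Finset.sum_eq_zero fun j' hj' => ?_
      simp only [Finset.mem_Icc] at hj'
      rw [map_smul, hφ _ _ _ (by omega) (by omega) (by omega) (by omega) (by omega),
        if_neg (by tauto), smul_zero]
    · intro hh
      simp only [Finset.mem_Icc] at hh
      omega

theorem sum_frakS_mem {F : Type*} [Field F] {V : Type*} [AddCommGroup V] [Module F V]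
    (m : ℕ) (N : Module.End F V) (k : ℕ → ℕ) (l : ℕ → ℕ → V)
    (P : ℕ → ℕ → ℕ → ℕ → ℕ → ℕ → F) (hP : SatisfiesP m k N l P)
    (a : {p // p ∈ blockIdx m k}) (ha : a.1.1 ≤ m) :
    ∑ b, frakS m k P a b • (N ^ (a.1.1 - 1)) (l b.1.1 b.1.2) ∈
      LinearMap.range (N ^ a.1.1) := by
  have hsplit : ∀ b, frakS m k P a b = (if a = b then 1 else 0) +
      (if a.1.1 < b.1.1 then P a.1.1 (a.1.1 - 1) b.1.1 (a.1.1 - 1) a.1.2 b.1.2 else 0) := by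
    rintro ⟨⟨y, j⟩, hb⟩
    obtain ⟨⟨u, i⟩, ha⟩ := a
    simp only [frakS, Matrix.of_apply, Subtype.mk.injEq, Sigma.mk.injEq, heq_eq_eq]
    by_cases h1 : u = y
    · simp [h1]
    · simp [h1]
  obtain ⟨⟨u, i⟩, ha'⟩ := a
  have ha'' := ha'
  simp only [blockIdx, Finset.mem_sigma, Finset.mem_Icc] at ha''
  simp only at ha hsplit ⊢
  simp only [hsplit, add_smul, Finset.sum_add_distrib, ite_smul, one_smul, zero_smul,
    Finset.sum_ite_eq, Finset.mem_univ, if_true]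
  have e1 : (∑ b : {p // p ∈ blockIdx m k}, if u < b.1.1 then
      P u (u - 1) b.1.1 (u - 1) i b.1.2 • (N ^ (u - 1)) (l b.1.1 b.1.2) else 0) =
      ∑ y ∈ Finset.Icc (u - 1 + 2) (m + 1), ∑ j ∈ Finset.Icc 1 (k y),
        P u (u - 1) y (u - 1) i j • (N ^ (u - 1)) (l y j) := by
    rw [Finset.sum_coe_sort (blockIdx m k) (fun b => if u < b.1 then
      P u (u - 1) b.1 (u - 1) i b.2 • (N ^ (u - 1)) (l b.1 b.2) else 0)]
    rw [blockIdx, Finset.sum_sigma]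
    symm
    have hsub : Finset.Icc (u - 1 + 2) (m + 1) ⊆ Finset.Icc 1 (m + 1) :=
      Finset.Icc_subset_Icc (by omega) le_rfl
    rw [← Finset.sum_subset hsub]
    · refine Finset.sum_congr rfl fun y hy => ?_
      simp only [Finset.mem_Icc] at hy
      refine Finset.sum_congr rfl fun j hj => ?_
      rw [if_pos (by dsimp only; omega)]
    · intro y hy hy'
      simp only [Finset.mem_Icc] at hy hy'
      refine Finset.sum_eq_zero fun j hj => ?_
      rw [if_neg (by dsimp only; omega)]
  have hp := hP u (by simp; omega) (u - 1) (by simp; omega) i (by simp; omega)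
  have hmem : u - 1 ∈ Finset.Icc (u - 1) (m - 1) := by simp; omega
  rw [← Finset.add_sum_erase _ _ hmem] at hp
  rw [e1, hp, neg_add, add_right_comm, neg_add_cancel, zero_add]
  refine Submodule.neg_mem _ (Submodule.sum_mem _ fun z hz => Submodule.sum_mem _ fun y hy =>
    Submodule.sum_mem _ fun j hj => Submodule.smul_mem _ _ ?_)
  simp only [Finset.mem_erase, Finset.mem_Icc] at hz
  refine ⟨(N ^ (z - u)) (l y j), ?_⟩
  rw [← Module.End.mul_apply, ← pow_add]
  congr 2
  omega

/-- Remark 3.24.B of the paper: `𝔓` is the inverse of `𝔖`. -/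
theorem stmt_6 {F : Type*} [Field F] {V : Type*} [AddCommGroup V] [Module F V]
    [FiniteDimensional F V]
    (m : ℕ) (hm : 1 ≤ m) (N : Module.End F V) (hN : N ^ m = 0)
    (k : ℕ → ℕ) (l : ℕ → ℕ → V) (hbasis : IsSiegelBasis F m k N l)
    (P : ℕ → ℕ → ℕ → ℕ → ℕ → ℕ → F) (hP : SatisfiesP m k N l P) :
    frakS m k P * frakP m k P = 1 ∧ frakP m k P * frakS m k P = 1 := by
  suffices hmain : frakS m k P * frakP m k P = 1 from
    ⟨hmain, mul_eq_one_comm.mp hmain⟩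
  ext a c
  rw [Matrix.mul_apply]
  by_cases hac : a.1.1 < c.1.1
  · have ha := a.2
    have hc := c.2
    simp only [blockIdx, Finset.mem_sigma, Finset.mem_Icc] at ha hc
    obtain ⟨φ, h1, h2⟩ := exists_functional m hm N hN k l hbasis c.1.1 c.1.2 (by omega)
      (by omega) (by omega) (by omega)
    rw [Matrix.one_apply_ne (by rintro rfl; omega)]
    simp only [← functional_eq m N k l P hP c (by omega) φ h1]
    obtain ⟨x, hx⟩ := sum_frakS_mem m N k l P hP a (by omega)
    have h3 := h2 ((N ^ (c.1.1 - a.1.1 - 1)) ((N ^ a.1.1) x)) ⟨x, by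
      rw [← Module.End.mul_apply, ← pow_add]
      congr 2
      omega⟩
    rw [hx, map_sum, map_sum] at h3
    rw [← h3]
    refine Finset.sum_congr rfl fun b _ => ?_
    rw [map_smul, map_smul, ← Module.End.mul_apply, ← pow_add, smul_eq_mul]
    congr 4
    omega
  · rw [Finset.sum_eq_single a]
    · obtain ⟨⟨u, i⟩, ha⟩ := a
      obtain ⟨⟨w, h⟩, hc⟩ := c
      simp only at hac
      simp only [frakS, frakP, Matrix.of_apply, Matrix.one_apply, Subtype.mk.injEq,
        Sigma.mk.injEq, heq_eq_eq, if_true, one_mul, if_neg hac]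
      by_cases h1 : u = w <;> simp [h1]
    · rintro ⟨⟨y, j⟩, hb⟩ _ hne
      obtain ⟨⟨u, i⟩, ha⟩ := a
      obtain ⟨⟨w, h⟩, hc⟩ := c
      simp only [ne_eq, Subtype.mk.injEq, Sigma.mk.injEq, heq_eq_eq] at hac hne
      simp only [frakS, frakP, Matrix.of_apply]
      by_cases h1 : u = y
      · rw [if_pos h1, if_neg (fun h => hne ⟨h1.symm, h.symm⟩), zero_mul]
      · by_cases h2 : u < y
        · rw [if_neg (show ¬ y = w by omega), if_neg (show ¬ y < w by omega), mul_zero]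
        · rw [if_neg h1, if_neg h2, zero_mul]
    · simp
end

section
/- Suppose l_1, …, l_r ∈ V are such that the vectors N^i l_j (0 ≤ i ≤ m−1, 1 ≤ j ≤ r) span V over F. Set k_1 := r − c_1. Then k_1 ≥ 0 and the list l_1, …, l_r can be re-indexed (by a bijection) as l_{u,i} (u = 1,…,m+1, i = 1,…,k_u) in such a way that for every u ∈ {0,…,m−1} the vectors N^α l_{β,γ} with u ≤ α ≤ m−1, α+2 ≤ β ≤ m+1, 1 ≤ γ ≤ k_β form an F-basis of the subspace N^u V. (The construction (3.6)–(3.12) of the paper: existence of a Siegel arrangement of the generators.) -/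
open Module in
theorem siegel_rank_step {F : Type*} [Field F] {V : Type*} [AddCommGroup V] [Module F V]
    [FiniteDimensional F V] (N : Module.End F V) (u : ℕ) :
    finrank F (Submodule.map (LinearMap.range (N ^ (u+1))).mkQ (LinearMap.range (N ^ u))) +
      finrank F (LinearMap.range (N ^ (u+1))) = finrank F (LinearMap.range (N ^ u)) := by
  have hle : LinearMap.range (N ^ (u+1)) ≤ LinearMap.range (N ^ u) := by
    rw [pow_succ]
    exact LinearMap.range_comp_le_range _ _
  have h := LinearMap.finrank_range_add_finrank_ker
    ((LinearMap.range (N ^ (u+1))).mkQ.domRestrict (LinearMap.range (N ^ u)))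
  rw [LinearMap.range_domRestrict, LinearMap.ker_domRestrict, Submodule.ker_mkQ] at h
  rw [← h, (Submodule.comapSubtypeEquivOfLe hle).finrank_eq]

/-- good index set at level `u`. -/
def SiegelGood {F : Type*} [Field F] {V : Type*} [AddCommGroup V] [Module F V]
    (N : Module.End F V) {r : ℕ} (l : Fin r → V) (u : ℕ) (S : Finset (Fin r)) : Prop :=
  LinearIndepOn F (fun j => (LinearMap.range (N ^ (u+1))).mkQ ((N ^ u) (l j))) (S : Set (Fin r)) ∧
  ∀ j, (LinearMap.range (N ^ (u+1))).mkQ ((N ^ u) (l j)) ∈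
    Submodule.span F ((fun j => (LinearMap.range (N ^ (u+1))).mkQ ((N ^ u) (l j))) ''
      (S : Set (Fin r)))

theorem siegel_extend {F : Type*} [Field F] {V : Type*} [AddCommGroup V] [Module F V]
    (N : Module.End F V) {r : ℕ} (l : Fin r → V) (u : ℕ) (T : Finset (Fin r))
    (hT : SiegelGood N l (u+1) T) : ∃ S, T ⊆ S ∧ SiegelGood N l u S := by
  classical
  have hle : LinearMap.range (N ^ (u+1)) ≤
      (LinearMap.range (N ^ (u+1+1))).comap N := by
    rintro _ ⟨x, rfl⟩
    exact ⟨x, by rw [pow_succ' N (u+1)]; rfl⟩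
  have hi : LinearIndepOn F (fun j => (LinearMap.range (N ^ (u+1))).mkQ ((N ^ u) (l j)))
      (T : Set (Fin r)) := by
    have h := hT.1
    refine LinearIndependent.of_comp (Submodule.mapQ _ _ N hle) ?_
    have heq : (fun j => (LinearMap.range (N ^ (u+1+1))).mkQ ((N ^ (u+1)) (l j))) =
        (fun j => Submodule.mapQ _ _ N hle
          ((LinearMap.range (N ^ (u+1))).mkQ ((N ^ u) (l j)))) := by
      funext j
      have hp : (N ^ (u+1)) (l j) = N ((N ^ u) (l j)) := by
        rw [pow_succ' N u]
        rfl
      rw [hp]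
      rfl
    rw [heq] at h
    exact h
  obtain ⟨b, -, hTb, hsp, hb⟩ := exists_linearIndepOn_extension hi (Set.subset_univ _)
  refine ⟨b.toFinset, ?_, ?_, ?_⟩
  · intro x hx; simpa using hTb hx
  · simpa using hb
  · intro j
    simpa using hsp ⟨j, trivial, rfl⟩

theorem siegel_chain {F : Type*} [Field F] {V : Type*} [AddCommGroup V] [Module F V]
    (m : ℕ) (N : Module.End F V) (hN : N ^ m = 0) {r : ℕ} (l : Fin r → V) :
    ∃ S : ℕ → Finset (Fin r), (∀ u, S (u+1) ⊆ S u) ∧ S m = ∅ ∧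
      ∀ u, u ≤ m → SiegelGood N l u (S u) := by
  classical
  have key : ∀ d, d ≤ m → ∃ S : ℕ → Finset (Fin r), (∀ u, m - d ≤ u → S (u+1) ⊆ S u) ∧ 
      S m = ∅ ∧ ∀ u, m - d ≤ u → u ≤ m → SiegelGood N l u (S u) := by
    intro d
    induction d with
    | zero =>
      intro _
      refine ⟨fun _ => ∅, by simp, rfl, ?_⟩
      intro u h1 h2
      obtain rfl : u = m := by omega
      refine ⟨by simp, ?_⟩
      intro j
      simp [hN]
    | succ d ih =>
      intro hd
      obtain ⟨S, h1, h2, h3⟩ := ih (by omega)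
      obtain ⟨v, hv⟩ : ∃ v, v = m - (d+1) := ⟨_, rfl⟩
      obtain ⟨T, hT, hT'⟩ := siegel_extend N l v (S (v+1)) (h3 _ (by omega) (by omega))
      refine ⟨Function.update S v T, ?_, ?_, ?_⟩
      · intro u hu
        rw [Function.update_of_ne (show u+1 ≠ v by omega)]
        by_cases h : u = v
        · subst h; simpa using hT
        · rw [Function.update_of_ne h]; exact h1 u (by omega)
      · rw [Function.update_of_ne (show m ≠ v by omega)]; exact h2
      · intro u hu hu'
        by_cases h : u = v
        · subst h; simpa using hT'
        · rw [Function.update_of_ne h]; exact h3 u (by omega) hu'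
  obtain ⟨S, h1, h2, h3⟩ := key m le_rfl
  exact ⟨S, fun u => h1 u (by omega), h2, fun u hu => h3 u (by omega) hu⟩

theorem siegel_span {F : Type*} [Field F] {V : Type*} [AddCommGroup V] [Module F V]
    (m : ℕ) (N : Module.End F V) {r : ℕ} (l : Fin r → V)
    (hspan : Submodule.span F {x : V | ∃ (i : ℕ) (j : Fin r), i < m ∧ x = (N ^ i) (l j)} = ⊤)
    (u : ℕ) (S : Finset (Fin r)) (hS : SiegelGood N l u S) :
    Submodule.map (LinearMap.range (N ^ (u+1))).mkQ (LinearMap.range (N ^ u)) =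
    Submodule.span F ((fun j => (LinearMap.range (N ^ (u+1))).mkQ ((N ^ u) (l j))) ''
      (S : Set (Fin r))) := by
  apply le_antisymm
  · have hr : LinearMap.range (N ^ u) = Submodule.span F
        ((N ^ u) '' {x : V | ∃ (i : ℕ) (j : Fin r), i < m ∧ x = (N ^ i) (l j)}) := by
      rw [LinearMap.range_eq_map, ← hspan, Submodule.map_span]
    rw [hr, Submodule.map_span, Submodule.span_le]
    rintro _ ⟨_, ⟨_, ⟨i, j, hi, rfl⟩, rfl⟩, rfl⟩
    cases i with
    | zero => exact hS.2 j
    | succ i =>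
      have : (LinearMap.range (N ^ (u+1))).mkQ ((N ^ u) ((N ^ (i+1)) (l j))) = 0 := by
        rw [Submodule.mkQ_apply, Submodule.Quotient.mk_eq_zero]
        refine ⟨(N ^ i) (l j), ?_⟩
        rw [← Module.End.mul_apply, ← Module.End.mul_apply, ← pow_add, ← pow_add]
        congr 2; omega
      rw [this]; exact Submodule.zero_mem _
  · rw [Submodule.span_le]
    rintro _ ⟨j, -, rfl⟩
    exact ⟨_, ⟨_, rfl⟩, rfl⟩

open Module in
theorem siegel_card {F : Type*} [Field F] {V : Type*} [AddCommGroup V] [Module F V]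
    [FiniteDimensional F V]
    (m : ℕ) (N : Module.End F V) {r : ℕ} (l : Fin r → V)
    (hspan : Submodule.span F {x : V | ∃ (i : ℕ) (j : Fin r), i < m ∧ x = (N ^ i) (l j)} = ⊤)
    (u : ℕ) (S : Finset (Fin r)) (hS : SiegelGood N l u S) :
    S.card + finrank F (LinearMap.range (N ^ (u+1))) = finrank F (LinearMap.range (N ^ u)) := by
  rw [← siegel_rank_step N u, siegel_span m N l hspan u S hS]
  congr 1
  have h := finrank_span_eq_card hS.1
  rw [Set.image_eq_range, h]; simp

/-- the construction (3.6)–(3.12) of the paper: if `N^i l_j`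
(`0 ≤ i ≤ m-1`, `1 ≤ j ≤ r`) span `V`, then `c_1 ≤ r` (i.e. `k_1 = r - c_1 ≥ 0`) and the
list `l_1, …, l_r` can be re-indexed by a bijection as `l'_{u,i}` (`1 ≤ u ≤ m+1`,
`1 ≤ i ≤ k_u`) so that condition (3.12) holds. -/
theorem stmt_9 {F : Type*} [Field F] {V : Type*} [AddCommGroup V] [Module F V]
    [FiniteDimensional F V]
    (m : ℕ) (hm : 1 ≤ m) (N : Module.End F V) (hN : N ^ m = 0)
    (r : ℕ) (l : Fin r → V)
    (hspan : Submodule.span F {x : V | ∃ (i : ℕ) (j : Fin r), i < m ∧ x = (N ^ i) (l j)} = ⊤)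
    (c k : ℕ → ℕ)
    (hc : ∀ j : ℕ, 1 ≤ j → j ≤ m + 1 →
      c j = Module.finrank F (LinearMap.ker (N ^ j)) -
            Module.finrank F (LinearMap.ker (N ^ (j - 1))))
    (hk2 : ∀ i : ℕ, 2 ≤ i → i ≤ m + 1 → k i = c (i - 1) - c i)
    (hk1 : k 1 = r - c 1) :
    c 1 ≤ r ∧
      ∃ (l' : ℕ → ℕ → V) (e : {p // p ∈ blockIdx m k} ≃ Fin r),
        (∀ p : {p // p ∈ blockIdx m k}, l' p.1.1 p.1.2 = l (e p)) ∧
        IsSiegelBasis F m k N l' := by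
  classical
  obtain ⟨S, hmono, hSm, hgood⟩ := siegel_chain m N hN l
  have hcardrk : ∀ u, u ≤ m → (S u).card + Module.finrank F (LinearMap.range (N ^ (u+1))) =
      Module.finrank F (LinearMap.range (N ^ u)) :=
    fun u hu => siegel_card m N l hspan u (S u) (hgood u hu)
  have hcard : ∀ u, u ≤ m → (S u).card = c (u+1) := by
    intro u hu
    have h1 := hcardrk u hu
    have h2 := LinearMap.finrank_range_add_finrank_ker (N ^ u)
    have h3 := LinearMap.finrank_range_add_finrank_ker (N ^ (u+1))
    rw [hc (u+1) (by omega) (by omega)]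
    rw [Nat.add_sub_cancel]
    omega
  have hanti : Antitone S := antitone_nat_of_succ_le hmono
  have hex : ∀ j, ∃ u, j ∉ S u := fun j => ⟨m, by simp [hSm]⟩
  obtain ⟨b, hb⟩ : ∃ b : Fin r → ℕ, ∀ j u, j ∈ S u ↔ u + 2 ≤ b j := by
    refine ⟨fun j => Nat.find (hex j) + 1, ?_⟩
    intro j u
    dsimp only
    constructor
    · intro h
      by_contra hlt
      exact Nat.find_spec (hex j) (hanti (show Nat.find (hex j) ≤ u by omega) h)
    · intro h
      by_contra hn
      have := Nat.find_min' (hex j) hn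
      omega
  obtain ⟨b', hb'⟩ : ∃ b' : Fin r → ℕ, ∀ j, b' j = max (b j) 1 := ⟨_, fun _ => rfl⟩
  have hbS : ∀ j u, j ∈ S u ↔ u + 2 ≤ b' j := by
    intro j u; rw [hb, hb']; omega
  have hb1 : ∀ j, 1 ≤ b' j := by intro j; rw [hb']; omega
  have hbm : ∀ j, b' j ≤ m + 1 := by
    intro j
    by_contra h
    have : j ∈ S m := (hbS j m).2 (by omega)
    simp [hSm] at this
  have hfib : ∀ β, 1 ≤ β → β ≤ m + 1 →
      (Finset.Icc 1 (k β)).card = (Finset.univ.filter (fun j => b' j = β)).card := by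
    intro β h1 h2
    rw [Nat.card_Icc, Nat.add_sub_cancel]
    rcases Nat.lt_or_ge β 2 with h | h
    · obtain rfl : β = 1 := by omega
      have : (Finset.univ.filter (fun j => b' j = 1)) = (S 0)ᶜ := by
        ext j
        have := hb1 j
        simp only [Finset.mem_filter, Finset.mem_univ, true_and, Finset.mem_compl, hbS]
        omega
      rw [this, Finset.card_compl, hk1, hcard 0 (by omega)]
      simp
    · obtain ⟨u, rfl⟩ : ∃ u, β = u + 2 := ⟨β - 2, by omega⟩
      have : (Finset.univ.filter (fun j => b' j = u + 2)) = S u \ S (u+1) := by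
        ext j
        simp only [Finset.mem_filter, Finset.mem_univ, true_and, Finset.mem_sdiff, hbS]
        omega
      rw [this, Finset.card_sdiff_of_subset (hmono u), hk2 _ h h2, hcard u (by omega),
        hcard (u+1) (by omega)]
      rfl
  have hmem : ∀ p : (_ : ℕ) × ℕ, p ∈ blockIdx m k ↔
      (1 ≤ p.1 ∧ p.1 ≤ m + 1) ∧ p.2 ∈ Finset.Icc 1 (k p.1) := by
    intro p; simp [blockIdx]
  refine ⟨?_, ?_⟩
  · rw [← hcard 0 (by omega)]
    simpa using Finset.card_le_univ (S 0)
  have E : ∀ β, 1 ≤ β → β ≤ m + 1 →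
      (Finset.Icc 1 (k β)) ≃ (Finset.univ.filter (fun j => b' j = β)) :=
    fun β h1 h2 => Finset.equivOfCardEq (hfib β h1 h2)
  have hEb : ∀ β h1 h2 x, b' (E β h1 h2 x).1 = β := by
    intro β h1 h2 x
    exact (Finset.mem_filter.1 (E β h1 h2 x).2).2
  obtain ⟨e, he⟩ : ∃ e : {p // p ∈ blockIdx m k} ≃ Fin r, ∀ p, b' (e p) = p.1.1 := by
    let g : {p // p ∈ blockIdx m k} → Fin r := fun p =>
      (E p.1.1 ((hmem p.1).1 p.2).1.1 ((hmem p.1).1 p.2).1.2 ⟨p.1.2, ((hmem p.1).1 p.2).2⟩).1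
    have hg : ∀ p, b' (g p) = p.1.1 := fun p => hEb _ _ _ _
    refine ⟨Equiv.ofBijective g ⟨?_, ?_⟩, hg⟩
    · intro p q hpq
      have h1 : p.1.1 = q.1.1 := by rw [← hg p, ← hg q, hpq]
      obtain ⟨⟨p1, p2⟩, hp⟩ := p
      obtain ⟨⟨q1, q2⟩, hq⟩ := q
      dsimp at h1
      subst h1
      have := (E _ _ _).injective (Subtype.ext hpq)
      simpa using this
    · intro j
      obtain ⟨x, hx⟩ := (E (b' j) (hb1 j) (hbm j)).surjective ⟨j, by simp⟩
      refine ⟨⟨⟨b' j, x.1⟩, (hmem _).2 ⟨⟨hb1 j, hbm j⟩, x.2⟩⟩, ?_⟩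
      exact congrArg Subtype.val hx
  obtain ⟨l', hl'⟩ : ∃ l' : ℕ → ℕ → V, ∀ p : {p // p ∈ blockIdx m k},
      l' p.1.1 p.1.2 = l (e p) := by
    refine ⟨fun a i => if h : (⟨a, i⟩ : (_ : ℕ) × ℕ) ∈ blockIdx m k then l (e ⟨_, h⟩) else 0, ?_⟩
    intro p
    exact dif_pos p.2
  refine ⟨l', e, hl', ?_⟩
  have hidx : ∀ u, ∀ p ∈ siegelIdxSet m k u, (⟨p.2.1, p.2.2⟩ : (_ : ℕ) × ℕ) ∈ blockIdx m k := by
    rintro u ⟨α, β, γ⟩ ⟨h1, h2, h3, h4, h5, h6⟩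
    rw [hmem]
    simp only [Finset.mem_Icc] at *
    omega
  -- the spanning part
  have hsp : ∀ d u, u + d = m → LinearMap.range (N ^ u) ≤ Submodule.span F
      ((fun p : ℕ × ℕ × ℕ => (N ^ p.1) (l' p.2.1 p.2.2)) '' siegelIdxSet m k u) := by
    intro d
    induction d with
    | zero =>
      intro u hu
      obtain rfl : u = m := by omega
      rw [hN]; simp
    | succ d ih =>
      intro u hu x hx
      have hih := ih (u+1) (by omega)
      have hsub : siegelIdxSet m k (u+1) ⊆ siegelIdxSet m k u := by
        rintro p ⟨h1, h2⟩
        exact ⟨by omega, h2⟩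
      have hih' := hih.trans (Submodule.span_mono (Set.image_mono hsub))
      have h1 := siegel_span m N l hspan u (S u) (hgood u (by omega))
      have h2 : (LinearMap.range (N ^ (u+1))).mkQ x ∈
          Submodule.map (LinearMap.range (N ^ (u+1))).mkQ
            (Submodule.span F ((fun j => (N ^ u) (l j)) '' (S u : Set (Fin r)))) := by
        rw [Submodule.map_span, Set.image_image, ← h1]
        exact ⟨x, hx, rfl⟩
      obtain ⟨y, hy, hyx⟩ := h2
      have h3 : x - y ∈ LinearMap.range (N ^ (u+1)) := by
        rw [← Submodule.Quotient.mk_eq_zero, Submodule.Quotient.mk_sub, sub_eq_zero]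
        exact hyx.symm
      have h4 : y ∈ Submodule.span F
          ((fun p : ℕ × ℕ × ℕ => (N ^ p.1) (l' p.2.1 p.2.2)) '' siegelIdxSet m k u) := by
        refine Submodule.span_mono ?_ hy
        rintro _ ⟨j, hj, rfl⟩
        obtain ⟨p, rfl⟩ := e.surjective j
        refine ⟨⟨u, p.1.1, p.1.2⟩, ?_, ?_⟩
        · have h5 := (hbS _ _).1 hj
          rw [he] at h5
          have h6 := (hmem p.1).1 p.2
          simp only [Finset.mem_Icc] at h6
          refine ⟨le_rfl, ?_, h5, ?_, ?_, ?_⟩ <;> dsimp <;> omega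
        · dsimp
          rw [hl']
      have := Submodule.add_mem _ (hih' h3) h4
      simpa using this
  have hsum : ∀ d u, u + d = m → (∑ α ∈ Finset.Ico u m, (S α).card) =
      Module.finrank F (LinearMap.range (N ^ u)) := by
    intro d
    induction d with
    | zero =>
      intro u hu
      obtain rfl : u = m := by omega
      rw [hN, LinearMap.range_zero]; simp
    | succ d ih =>
      intro u hu
      rw [Finset.sum_eq_sum_Ico_succ_bot (by omega), ih (u+1) (by omega), hcardrk u (by omega)]
  intro u hu
  have hspeq : Submodule.span F
      ((fun p : ℕ × ℕ × ℕ => (N ^ p.1) (l' p.2.1 p.2.2)) '' siegelIdxSet m k u) =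
      LinearMap.range (N ^ u) := by
    apply le_antisymm
    · rw [Submodule.span_le]
      rintro _ ⟨p, hp, rfl⟩
      refine ⟨(N ^ (p.1 - u)) (l' p.2.1 p.2.2), ?_⟩
      have := hp.1
      rw [← Module.End.mul_apply, ← pow_add]
      congr 2; omega
    · exact hsp (m - u) u (by omega)
  refine ⟨?_, hspeq⟩
  let φ : siegelIdxSet m k u → ((Finset.Ico u m).sigma S : Finset ((_ : ℕ) × Fin r)) := fun p =>
    ⟨⟨p.1.1, e ⟨_, hidx u p.1 p.2⟩⟩, by
      obtain ⟨p, h1, h2, h3, h4⟩ := p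
      rw [Finset.mem_sigma, hbS, he, Finset.mem_Ico]
      dsimp
      omega⟩
  have hφ : Function.Injective φ := by
    rintro ⟨⟨p1, p2, p3⟩, hp⟩ ⟨⟨q1, q2, q3⟩, hq⟩ h
    simp only [φ, Subtype.mk.injEq, Sigma.mk.injEq, heq_eq_eq, e.injective.eq_iff] at h
    simp [h]
  have : Finite (siegelIdxSet m k u) := Finite.of_injective φ hφ
  have : Fintype (siegelIdxSet m k u) := Fintype.ofFinite _
  rw [Set.image_eq_range] at hspeq
  rw [linearIndependent_iff_card_le_finrank_span, Set.finrank, hspeq,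
    ← hsum (m - u) u (by omega)]
  refine (Fintype.card_le_of_injective φ hφ).trans ?_
  rw [Fintype.card_coe, Finset.card_sigma]
end
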